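/- arXiv:2306.12527 — 8 statements merged into one kernel-verified Lean document; each statement's English description precedes it below -/
import Mathlib

section
/- Let R be a commutative Noetherian local ring with maximal ideal 𝔪, and let f : M → N be an R-linear map between finitely generated flat R-modules. If the induced map M/𝔪M → N/𝔪N is injective, then f itself is injective and the cokernel of f is a flat R-module. -/
/-!
Over a local ring a finite flat module is free, and a map from a finite module to a finite free
module is a split injection with free cokernel as soon as it is injective after tensoring with the
residue field `k`. It remains to identify `Ideal.quotMap 𝔪 f` with `k ⊗ f`, through the natural
isomorphism `(R ⧸ I) ⊗ M ≃ M ⧸ I M`.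
-/

/-- The map `M/IM → N/IN` induced by an `R`-linear map `f : M → N` and an ideal `I`. -/
noncomputable def Ideal.quotMap {R M N : Type*} [CommRing R] [AddCommGroup M] [Module R M]
    [AddCommGroup N] [Module R N] (I : Ideal R) (f : M →ₗ[R] N) :
    (M ⧸ (I • ⊤ : Submodule R M)) →ₗ[R] (N ⧸ (I • ⊤ : Submodule R N)) :=
  Submodule.mapQ _ _ f (by
    rw [← Submodule.map_le_iff_le_comap, Submodule.map_smul'']
    exact Submodule.smul_mono le_rfl le_top)

/-- Naturality of `(R ⧸ I) ⊗ M ≃ M ⧸ I M` in `M`. -/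
theorem quotTensorEquivQuotSMul_comp_lTensor
    {R M N : Type*} [CommRing R] [AddCommGroup M] [Module R M] [AddCommGroup N] [Module R N]
    (I : Ideal R) (f : M →ₗ[R] N) :
    (TensorProduct.quotTensorEquivQuotSMul N I).toLinearMap ∘ₗ f.lTensor (R ⧸ I) =
      I.quotMap f ∘ₗ (TensorProduct.quotTensorEquivQuotSMul M I).toLinearMap := by
  refine TensorProduct.ext' fun r x => ?_
  obtain ⟨r, rfl⟩ := Ideal.Quotient.mk_surjective r
  simp [Ideal.quotMap]

/-- Let `R` be a commutative Noetherian local ring with maximal ideal `𝔪`, and let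
`f : M → N` be an `R`-linear map between finitely generated flat `R`-modules.  If the induced
map `M/𝔪M → N/𝔪N` is injective, then `f` is injective and the cokernel of `f` is flat. -/
theorem injective_and_flat_coker_of_injective_quotMap_maximalIdeal
    {R M N : Type*} [CommRing R] [IsNoetherianRing R] [IsLocalRing R]
    [AddCommGroup M] [Module R M] [AddCommGroup N] [Module R N]
    [Module.Finite R M] [Module.Finite R N] [Module.Flat R M] [Module.Flat R N]
    (f : M →ₗ[R] N)
    (hf : Function.Injective ((IsLocalRing.maximalIdeal R).quotMap f)) :
    Function.Injective f ∧ Module.Flat R (N ⧸ LinearMap.range f) := by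
  have : Module.Free R N := Module.free_of_flat_of_isLocalRing
  have hk : Function.Injective (f.lTensor (IsLocalRing.ResidueField R)) := by
    have hcomp : Function.Injective
        ((TensorProduct.quotTensorEquivQuotSMul N (IsLocalRing.maximalIdeal R)).toLinearMap ∘ₗ
          f.lTensor (R ⧸ IsLocalRing.maximalIdeal R)) := by
      rw [quotTensorEquivQuotSMul_comp_lTensor]
      exact hf.comp (LinearEquiv.injective _)
    rw [LinearMap.coe_comp] at hcomp
    -- `ResidueField R` is by definition `R ⧸ 𝔪`.
    exact hcomp.of_comp
  constructor
  · obtain ⟨g, hg⟩ := (IsLocalRing.split_injective_iff_lTensor_residueField_injective f).mpr hk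
    exact Function.HasLeftInverse.injective ⟨g, LinearMap.congr_fun hg⟩
  · have : Module.Free R (N ⧸ LinearMap.range f) :=
      Module.free_of_lTensor_residueField_injective f (LinearMap.range f).mkQ
        (Submodule.mkQ_surjective _) f.exact_map_mkQ_range hk
    infer_instance
end

section
/- Let R be a commutative Noetherian local ring with maximal ideal 𝔪, and let f : M → N be an R-linear map between finitely generated flat R-modules such that the induced map M/𝔪M → N/𝔪N is injective. Then for every natural number n ≥ 1, the induced map M/𝔪ⁿM → N/𝔪ⁿN is injective. -/
/-- Let `R` be a commutative Noetherian local ring with maximal ideal `𝔪`, and let `f : M → N`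
be an `R`-linear map between finitely generated flat `R`-modules such that the induced map
`M/𝔪M → N/𝔪N` is injective.  Then for every `n ≥ 1` the induced map `M/𝔪ⁿM → N/𝔪ⁿN` is
injective. -/
theorem injective_quotMap_maximalIdeal_pow_of_injective_quotMap_maximalIdeal
    {R M N : Type*} [CommRing R] [IsNoetherianRing R] [IsLocalRing R]
    [AddCommGroup M] [Module R M] [AddCommGroup N] [Module R N]
    [Module.Finite R M] [Module.Finite R N] [Module.Flat R M] [Module.Flat R N]
    (f : M →ₗ[R] N)
    (hf : Function.Injective ((IsLocalRing.maximalIdeal R).quotMap f)) :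
    ∀ n : ℕ, 1 ≤ n → Function.Injective ((IsLocalRing.maximalIdeal R ^ n).quotMap f) := by
  intro n _
  -- A finite flat module over a local ring is free.
  have : Module.Free R N := Module.free_of_flat_of_isLocalRing
  have hcomm : (TensorProduct.quotTensorEquivQuotSMul N (IsLocalRing.maximalIdeal R)).toLinearMap ∘ₗ
      f.lTensor (R ⧸ IsLocalRing.maximalIdeal R) =
      (IsLocalRing.maximalIdeal R).quotMap f ∘ₗ
        (TensorProduct.quotTensorEquivQuotSMul M (IsLocalRing.maximalIdeal R)).toLinearMap := by
    refine TensorProduct.ext' fun r x ↦ ?_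
    obtain ⟨r, rfl⟩ := Ideal.Quotient.mk_surjective r
    simp [Ideal.quotMap]
  have hinj : Function.Injective (f.lTensor (IsLocalRing.ResidueField R)) := by
    have h : Function.Injective
        ((TensorProduct.quotTensorEquivQuotSMul N (IsLocalRing.maximalIdeal R)).toLinearMap ∘ₗ
          f.lTensor (R ⧸ IsLocalRing.maximalIdeal R)) := by
      rw [hcomm]
      exact hf.comp (LinearEquiv.injective _)
    rw [LinearMap.coe_comp] at h
    exact h.of_comp
  obtain ⟨g, hg⟩ := (IsLocalRing.split_injective_iff_lTensor_residueField_injective f).mpr hinj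
  refine Function.LeftInverse.injective (g := (IsLocalRing.maximalIdeal R ^ n).quotMap g) fun x ↦ ?_
  obtain ⟨x, rfl⟩ := Submodule.Quotient.mk_surjective _ x
  exact congrArg _ (LinearMap.congr_fun hg x)
end

section
/- Let R be a commutative ring and let f : M → N be an injective R-linear map between flat R-modules. Then the cokernel of f is a flat R-module if and only if for every ideal I of R the induced map M/IM → N/IN is injective. -/
open scoped TensorProduct

section

variable {R M N : Type*} [CommRing R] [AddCommGroup M] [Module R M] [AddCommGroup N] [Module R N]

theorem Ideal.range_lift_lsmul_subtype (I : Ideal R) :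
    LinearMap.range (TensorProduct.lift ((LinearMap.lsmul R M).comp I.subtype)) =
      (I • ⊤ : Submodule R M) := by
  apply le_antisymm
  · rintro _ ⟨x, rfl⟩
    induction x with
    | zero => simp
    | tmul a m => exact Submodule.smul_mem_smul a.2 trivial
    | add x y hx hy => rw [map_add]; exact add_mem hx hy
  · rw [Submodule.smul_le]
    exact fun a ha m _ => ⟨⟨a, ha⟩ ⊗ₜ m, rfl⟩

/-- Multiplication `I ⊗ M → M` is natural in `M`. -/
theorem Ideal.lift_lsmul_subtype_lTensor (I : Ideal R) (f : M →ₗ[R] N) (x : I ⊗[R] M) :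
    TensorProduct.lift ((LinearMap.lsmul R N).comp I.subtype) (f.lTensor I x) =
      f (TensorProduct.lift ((LinearMap.lsmul R M).comp I.subtype) x) := by
  induction x with
  | zero => simp
  | tmul a m => simp
  | add x y hx hy => simp only [map_add, hx, hy]

theorem Ideal.quotMap_comp_quotTensorEquivQuotSMul (I : Ideal R) (f : M →ₗ[R] N) :
    I.quotMap f ∘ₗ (TensorProduct.quotTensorEquivQuotSMul M I).toLinearMap =
      (TensorProduct.quotTensorEquivQuotSMul N I).toLinearMap ∘ₗ f.lTensor (R ⧸ I) := by
  refine TensorProduct.ext' fun r m => ?_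
  obtain ⟨r, rfl⟩ := Ideal.Quotient.mk_surjective r
  simp [Ideal.quotMap]

end

/-- Let `R` be a commutative ring and `f : M → N` an injective `R`-linear map between flat
`R`-modules.  Then the cokernel of `f` is flat if and only if for every ideal `I` of `R` the
induced map `M/IM → N/IN` is injective. -/
theorem flat_coker_iff_forall_injective_quotMap
    {R M N : Type*} [CommRing R]
    [AddCommGroup M] [Module R M] [AddCommGroup N] [Module R N]
    [Module.Flat R M] [Module.Flat R N]
    (f : M →ₗ[R] N) (hf : Function.Injective f) :
    Module.Flat R (N ⧸ LinearMap.range f) ↔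
      ∀ I : Ideal R, Function.Injective (I.quotMap f) := by
  constructor
  · intro _ I
    have h := LinearMap.lTensor_injective_of_exact_of_flat (LinearMap.range f).mkQ
      (Submodule.mkQ_surjective _) f hf (LinearMap.exact_map_mkQ_range f) (R ⧸ I)
    rw [← EquivLike.injective_comp (TensorProduct.quotTensorEquivQuotSMul M I)]
    have hc := congrArg DFunLike.coe (I.quotMap_comp_quotTensorEquivQuotSMul f)
    simp only [LinearMap.coe_comp, LinearEquiv.coe_coe] at hc
    rw [hc]
    exact (TensorProduct.quotTensorEquivQuotSMul N I).injective.comp h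
  · intro H
    rw [Module.Flat.iff_lift_lsmul_comp_subtype_injective]
    intro I hI
    rw [injective_iff_map_eq_zero]
    intro x hx
    obtain ⟨y, rfl⟩ := LinearMap.lTensor_surjective I (Submodule.mkQ_surjective _) x
    rw [Ideal.lift_lsmul_subtype_lTensor, Submodule.mkQ_apply,
      Submodule.Quotient.mk_eq_zero] at hx
    obtain ⟨m, hm⟩ := hx
    have hmI : m ∈ (I • ⊤ : Submodule R M) := by
      rw [← Submodule.Quotient.mk_eq_zero]
      apply H I
      rw [map_zero, Ideal.quotMap, Submodule.mapQ_apply, Submodule.Quotient.mk_eq_zero, hm,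
        ← Ideal.range_lift_lsmul_subtype]
      exact LinearMap.mem_range_self _ y
    rw [← Ideal.range_lift_lsmul_subtype] at hmI
    obtain ⟨z, rfl⟩ := hmI
    rw [← Ideal.lift_lsmul_subtype_lTensor] at hm
    obtain rfl := Module.Flat.iff_lift_lsmul_comp_subtype_injective.mp ‹Module.Flat R N› hI hm
    exact (lTensor_exact I (LinearMap.exact_map_mkQ_range f)
      (Submodule.mkQ_surjective _)).apply_apply_eq_zero z
end

section
/- Let R be a commutative ring, I an ideal of R contained in the Jacobson radical of R, and A an associative R-algebra that is finitely generated and free as an R-module. Let M be a left A-module that is finitely generated and projective as an R-module. Then M is a finite free left A-module if and only if M/IM is a finite free left module over the quotient algebra A/IA. -/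
/-!
An `A`-linear isomorphism `M ≃ Aⁿ` carries `IM` onto `(IA)ⁿ`, which gives the forward direction.

Conversely, lift the images in `M/IM` of the standard basis of `(A/IA)ⁿ` to `M`, obtaining an
`A`-linear map `f : Aⁿ → M` which is an isomorphism modulo `I`. Since `M` is finite over `R`,
Nakayama's lemma makes `f` surjective. As `M` is `R`-projective, `f` has an `R`-linear section,
so `K = ker f` is an `R`-direct summand of `Aⁿ`; hence it is finite over `R`, and
`K ⊆ I Aⁿ` forces `K = I K`. Nakayama's lemma again gives `K = 0`.
-/

section

variable {R A P Q : Type*} [CommRing R] [Ring A] [Algebra R A]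
  [AddCommGroup P] [Module A P] [Module R P] [IsScalarTower R A P]
  [AddCommGroup Q] [Module A Q] [Module R Q] [IsScalarTower R A Q]

/-- The `A`-submodule `IP` of `P`, generated by the products `i • x` with `i ∈ I`. -/
abbrev idealSpan (A P : Type*) {R : Type*} [CommRing R] [Ring A]
    [AddCommGroup P] [Module A P] [Module R P] (I : Ideal R) : Submodule A P :=
  Submodule.span A {m : P | ∃ i ∈ I, ∃ x : P, i • x = m}

lemma map_mem_idealSpan (I : Ideal R) (f : P →ₗ[A] Q) {x : P} (hx : x ∈ idealSpan A P I) :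
    f x ∈ idealSpan A Q I := by
  have h : idealSpan A P I ≤ (idealSpan A Q I).comap f := by
    refine Submodule.span_le.2 ?_
    rintro _ ⟨i, hi, y, rfl⟩
    exact Submodule.subset_span ⟨i, hi, f y, ((f.restrictScalars R).map_smul i y).symm⟩
  exact h hx

/-- The `R`-submodule `I • ⊤` is already stable under `A`, because the actions of `R` and `A`
commute. -/
lemma mem_smul_top_of_mem_idealSpan (I : Ideal R) {x : P} (hx : x ∈ idealSpan A P I) :
    x ∈ I • (⊤ : Submodule R P) := by
  induction hx using Submodule.span_induction with
  | mem x h =>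
    obtain ⟨i, hi, y, rfl⟩ := h
    exact Submodule.smul_mem_smul hi trivial
  | zero => exact zero_mem _
  | add x y _ _ hx hy => exact add_mem hx hy
  | smul a x _ hx =>
    have h := Submodule.mem_map_of_mem (f := Algebra.lsmul R R P a) hx
    rw [Submodule.map_smul''] at h
    exact Submodule.smul_mono le_rfl le_top h

lemma mem_idealSpan_pi (I : Ideal R) {n : ℕ} (v : Fin n → A) :
    v ∈ idealSpan A (Fin n → A) I ↔ ∀ j, v j ∈ idealSpan A A I := by
  refine ⟨fun h j => map_mem_idealSpan I (LinearMap.proj (R := A) (φ := fun _ => A) j) h,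
    fun h => ?_⟩
  rw [← Finset.univ_sum_single v]
  exact Submodule.sum_mem _ fun j _ =>
    map_mem_idealSpan I (LinearMap.single A (fun _ : Fin n => A) j) (h j)

end

/-- Let `R` be a commutative ring, `I` an ideal of `R` contained in the Jacobson radical of
`R`, and `A` an associative `R`-algebra that is finitely generated and free as an `R`-module.
Let `M` be a left `A`-module that is finitely generated and projective as an `R`-module.  Then
`M` is a finite free left `A`-module if and only if `M/IM` is a finite free left module over
the quotient algebra `A/IA`.  Here `IM` (resp. `IA`) is realised as the `A`-submodule of `M`
(resp. of `A`) generated by the products `i • x` with `i ∈ I`, and an `A`-linear isomorphism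
between `A/IA`-modules is the same thing as an `A/IA`-linear isomorphism. -/
theorem free_of_finite_free_quotient_jacobson
    {R A M : Type*} [CommRing R] [Ring A] [Algebra R A]
    [AddCommGroup M] [Module A M] [Module R M] [IsScalarTower R A M]
    (I : Ideal R) (hI : I ≤ (⊥ : Ideal R).jacobson)
    [Module.Finite R A] [Module.Free R A]
    [Module.Finite R M] [Module.Projective R M] :
    (∃ n : ℕ, Nonempty (M ≃ₗ[A] (Fin n → A))) ↔
      ∃ n : ℕ, Nonempty
        ((M ⧸ Submodule.span A {m : M | ∃ i ∈ I, ∃ x : M, i • x = m}) ≃ₗ[A]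
          (Fin n → A ⧸ Submodule.span A {a : A | ∃ i ∈ I, ∃ x : A, i • x = a})) := by
  constructor
  · rintro ⟨n, ⟨e⟩⟩
    let g : M →ₗ[A] (Fin n → A ⧸ idealSpan A A I) :=
      (idealSpan A A I).mkQ.compLeft (Fin n) ∘ₗ e.toLinearMap
    have hg : Function.Surjective g :=
      ((idealSpan A A I).mkQ_surjective.comp_left).comp e.surjective
    have hk : idealSpan A M I = LinearMap.ker g := by
      ext m
      have h1 : m ∈ LinearMap.ker g ↔ e m ∈ idealSpan A (Fin n → A) I := by
        rw [mem_idealSpan_pi, LinearMap.mem_ker, funext_iff]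
        exact forall_congr' fun j => Submodule.Quotient.mk_eq_zero _
      rw [h1]
      refine ⟨fun h => map_mem_idealSpan I e.toLinearMap h, fun h => ?_⟩
      simpa using map_mem_idealSpan I e.symm.toLinearMap h
    exact ⟨n, ⟨(Submodule.quotEquivOfEq _ _ hk).trans (g.quotKerEquivOfSurjective hg)⟩⟩
  · rintro ⟨n, ⟨e⟩⟩
    choose b hb using fun j : Fin n => (idealSpan A M I).mkQ_surjective
      (e.symm (Pi.single j ((idealSpan A A I).mkQ 1)))
    let f : (Fin n → A) →ₗ[A] M := (Pi.basisFun A (Fin n)).constr ℕ b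
    have hf : e.toLinearMap ∘ₗ (idealSpan A M I).mkQ ∘ₗ f =
        (idealSpan A A I).mkQ.compLeft (Fin n) := by
      refine (Pi.basisFun A (Fin n)).ext fun j => ?_
      have hfj : f (Pi.basisFun A (Fin n) j) = b j := Module.Basis.constr_basis _ _ _ _
      rw [LinearMap.comp_apply, LinearMap.comp_apply, hfj, hb]
      ext k
      by_cases hjk : k = j
      · subst hjk; simp
      · simp [hjk]
    have hfv (v : Fin n → A) : e ((idealSpan A M I).mkQ (f v)) =
        (idealSpan A A I).mkQ.compLeft (Fin n) v := LinearMap.congr_fun hf v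
    let fR : (Fin n → A) →ₗ[R] M := f.restrictScalars R
    have hsurj : Function.Surjective fR := by
      rw [← LinearMap.range_eq_top, ← top_le_iff]
      refine Submodule.le_of_le_smul_of_le_jacobson_bot Module.Finite.fg_top hI fun m _ => ?_
      obtain ⟨v, hv⟩ := (idealSpan A A I).mkQ_surjective.comp_left (e ((idealSpan A M I).mkQ m))
      have h : (idealSpan A M I).mkQ m = (idealSpan A M I).mkQ (f v) :=
        e.injective (hv.symm.trans (hfv v).symm)
      have h' : m - f v ∈ idealSpan A M I := (Submodule.Quotient.eq _).1 h
      exact Submodule.mem_sup.2 ⟨f v, ⟨v, rfl⟩, m - f v, mem_smul_top_of_mem_idealSpan I h',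
        add_sub_cancel _ _⟩
    have hker (v : Fin n → A) (hv : f v = 0) : v ∈ I • (⊤ : Submodule R (Fin n → A)) := by
      refine mem_smul_top_of_mem_idealSpan (A := A) I ((mem_idealSpan_pi I v).2 fun j => ?_)
      have h := hfv v
      rw [hv, map_zero, map_zero] at h
      exact (Submodule.Quotient.mk_eq_zero _).1 (congrFun h j).symm
    obtain ⟨s, hs⟩ := Module.projective_lifting_property fR LinearMap.id hsurj
    -- `p` is the `R`-linear projection of `Aⁿ` onto `ker f` along the range of the section.
    let p : (Fin n → A) →ₗ[R] (Fin n → A) := LinearMap.id - s ∘ₗ fR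
    have hpv (v : Fin n → A) (hv : f v = 0) : p v = v := by
      change v - s (f v) = v
      rw [hv, map_zero, sub_zero]
    have hfp (v : Fin n → A) : f (p v) = 0 := by
      have h : f (s (f v)) = f v := LinearMap.congr_fun hs (f v)
      change f (v - s (f v)) = 0
      rw [map_sub, h, sub_self]
    have hK : Submodule.map p ⊤ = ⊥ := by
      refine Submodule.eq_bot_of_le_smul_of_le_jacobson_bot I _
        (Module.Finite.fg_top.map p) ?_ hI
      rintro _ ⟨y, -, rfl⟩
      rw [← Submodule.map_smul'']
      exact ⟨p y, hker _ (hfp y), hpv _ (hfp y)⟩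
    have hinj : Function.Injective f := by
      refine (injective_iff_map_eq_zero f).2 fun v hv => ?_
      have h : p v ∈ Submodule.map p ⊤ := ⟨v, trivial, rfl⟩
      rwa [hK, Submodule.mem_bot, hpv v hv] at h
    exact ⟨n, ⟨(LinearEquiv.ofBijective f ⟨hinj, hsurj⟩).symm⟩⟩
end

section
/- The quotient of the free 𝔽₂-algebra on two generators x and y by the two-sided ideal generated by the elements x·x, y·y, and x·y·x·y + y·x·y·x is isomorphic, as an 𝔽₂-algebra, to the group algebra 𝔽₂[D₈] of the dihedral group D₈ of order 8. -/
/-!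
Put `s = 1 + x` and `t = 1 + y`. In characteristic two, `x² = 0` is equivalent to `s² = 1`,
`y² = 0` to `t² = 1`, and, since `xy + yx = st + ts`, squaring gives
`(xy)² + (yx)² = (xy + yx)² = (st + ts)² = (st)² + (ts)²`. The defining relations of the quotient
are therefore the Coxeter relations `s² = t² = 1`, `(st)² = (ts)²` of the dihedral group of order
`8`, written in terms of `s + 1` and `t + 1`. The two translations are `mixed_of_coxeter` and
`coxeter_of_mixed`; the universal property of the dihedral group is `dihedralLift`. Together they
give algebra homomorphisms in both directions, which are mutually inverse on generators.
-/

open FreeAlgebra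

/-- The relations defining `𝒜(1)ᴿ/(ρ,τ)`: with `x = Sq¹` and `y = Sq²`, we impose
`x·x = 0`, `y·y = 0` and `x·y·x·y + y·x·y·x = 0` in the free `𝔽₂`-algebra on `x, y`. -/
inductive DihedralRel : FreeAlgebra (ZMod 2) (Fin 2) → FreeAlgebra (ZMod 2) (Fin 2) → Prop
  | xx : DihedralRel (ι (ZMod 2) (0 : Fin 2) * ι (ZMod 2) (0 : Fin 2)) 0
  | yy : DihedralRel (ι (ZMod 2) (1 : Fin 2) * ι (ZMod 2) (1 : Fin 2)) 0
  | mixed : DihedralRel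
      (ι (ZMod 2) (0 : Fin 2) * ι (ZMod 2) (1 : Fin 2) *
          ι (ZMod 2) (0 : Fin 2) * ι (ZMod 2) (1 : Fin 2) +
        ι (ZMod 2) (1 : Fin 2) * ι (ZMod 2) (0 : Fin 2) *
          ι (ZMod 2) (1 : Fin 2) * ι (ZMod 2) (0 : Fin 2)) 0

/-- In characteristic two, `xy + yx` is unchanged when `x` and `y` are translated by `1`. -/
lemma add_one_anticomm {A : Type*} [Ring A] (h2 : ∀ z : A, z + z = 0) (x y : A) :
    (1 + x) * (1 + y) + (1 + y) * (1 + x) = x * y + y * x := by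
  linear_combination (norm := noncomm_ring) h2 1 + h2 x + h2 y

lemma coxeter_of_mixed {A : Type*} [Ring A] (h2 : ∀ z : A, z + z = 0) {x y : A}
    (hx : x * x = 0) (hy : y * y = 0) (h : x * y * x * y + y * x * y * x = 0) :
    (1 + x) * (1 + x) = 1 ∧ (1 + y) * (1 + y) = 1 ∧
      (1 + x) * (1 + y) * (1 + x) * (1 + y) = (1 + y) * (1 + x) * (1 + y) * (1 + x) := by
  have hs : (1 + x) * (1 + x) = 1 := by
    linear_combination (norm := noncomm_ring) h2 x + hx
  have ht : (1 + y) * (1 + y) = 1 := by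
    linear_combination (norm := noncomm_ring) h2 y + hy
  refine ⟨hs, ht, ?_⟩
  have hc := add_one_anticomm h2 x y
  generalize 1 + x = s at *
  generalize 1 + y = t at *
  have hsq : (s * t + t * s) * (s * t + t * s) = 0 := by
    rw [hc]
    linear_combination (norm := noncomm_ring) h + x * hy * x + y * hx * y
  linear_combination (norm := noncomm_ring)
    hsq - s * ht * s - t * hs * t - hs - ht - h2 1 - h2 (t * s * t * s)

lemma mixed_of_coxeter {A : Type*} [Ring A] (h2 : ∀ z : A, z + z = 0) {s t : A}
    (hs : s * s = 1) (ht : t * t = 1) (h : s * t * s * t = t * s * t * s) :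
    (1 + s) * (1 + s) = 0 ∧ (1 + t) * (1 + t) = 0 ∧
      (1 + s) * (1 + t) * (1 + s) * (1 + t) + (1 + t) * (1 + s) * (1 + t) * (1 + s) = 0 := by
  have hx : (1 + s) * (1 + s) = 0 := by
    linear_combination (norm := noncomm_ring) h2 s + h2 1 + hs
  have hy : (1 + t) * (1 + t) = 0 := by
    linear_combination (norm := noncomm_ring) h2 t + h2 1 + ht
  refine ⟨hx, hy, ?_⟩
  have hc := add_one_anticomm h2 s t
  generalize 1 + s = x at *
  generalize 1 + t = y at *
  have hsq : (x * y + y * x) * (x * y + y * x) = 0 := by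
    rw [hc]
    linear_combination (norm := noncomm_ring)
      h + s * ht * s + t * hs * t + hs + ht + h2 1 + h2 (t * s * t * s)
  linear_combination (norm := noncomm_ring) hsq - x * hy * x - y * hx * y

/-- The homomorphism from the dihedral group of order `8` to a monoid determined by elements
`s`, `t` with `s² = t² = 1` and `(st)² = (ts)²`; it sends the reflections `sr 0`, `sr 1` to `s`,
`t` and the rotation `r 1 = sr 0 * sr 1` to `st`. -/
def dihedralLift {M : Type*} [Monoid M] (s t : M) (hs : s * s = 1) (ht : t * t = 1)
    (h : s * t * s * t = t * s * t * s) : DihedralGroup 4 →* M :=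
  have hs' (a : M) : s * (s * a) = a := by rw [← mul_assoc, hs, one_mul]
  have ht' (a : M) : t * (t * a) = a := by rw [← mul_assoc, ht, one_mul]
  have hu : (s * t) ^ 4 = 1 := by
    calc (s * t) ^ 4 = (s * t * s * t) * (s * t * s * t) := by simp only [pow_succ, pow_zero,
          one_mul, mul_assoc]
      _ = (t * s * t * s) * (s * t * s * t) := by rw [h]
      _ = 1 := by simp only [mul_assoc, hs', ht', ht]
  have hus : s * t * s = s * (s * t) ^ 3 := by
    calc s * t * s = (s * t * s * t) * t := by simp only [mul_assoc, ht, mul_one]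
      _ = (t * s * t * s) * t := by rw [h]
      _ = s * (s * t) ^ 3 := by simp only [pow_succ, pow_zero, one_mul, mul_assoc, hs']
  have hmod {a b : ℕ} (hab : a % 4 = b % 4) : (s * t) ^ a = (s * t) ^ b := by
    rw [pow_eq_pow_mod a hu, pow_eq_pow_mod b hu, hab]
  -- The inverse of `st` is `(st) ^ 3`, so conjugation by `s` triples exponents.
  have hcomm (n : ℕ) : (s * t) ^ n * s = s * (s * t) ^ (3 * n) := by
    induction n with
    | zero => simp
    | succ n ih =>
      rw [pow_succ, mul_assoc, hus, ← mul_assoc, ih, mul_assoc, ← pow_add, Nat.mul_succ]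
  { toFun := fun g => match g with
      | .r i => (s * t) ^ i.val
      | .sr i => s * (s * t) ^ i.val
    map_one' := by
      change (s * t) ^ (0 : ZMod 4).val = 1
      simp
    map_mul' := by
      rintro (i | i) (j | j)
      · change (s * t) ^ (i + j).val = (s * t) ^ i.val * (s * t) ^ j.val
        rw [← pow_add]
        exact hmod (by revert i j; decide)
      · change s * (s * t) ^ (j - i).val = (s * t) ^ i.val * (s * (s * t) ^ j.val)
        rw [← mul_assoc, hcomm, mul_assoc, ← pow_add]
        exact congrArg (s * ·) (hmod (by revert i j; decide))
      · change s * (s * t) ^ (i + j).val = s * (s * t) ^ i.val * (s * t) ^ j.val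
        rw [mul_assoc, ← pow_add]
        exact congrArg (s * ·) (hmod (by revert i j; decide))
      · change (s * t) ^ (j - i).val = s * (s * t) ^ i.val * (s * (s * t) ^ j.val)
        rw [mul_assoc, ← mul_assoc _ s, hcomm, mul_assoc, hs', ← pow_add]
        exact hmod (by revert i j; decide) }

lemma dihedralLift_sr_zero {M : Type*} [Monoid M] (s t : M) (hs : s * s = 1) (ht : t * t = 1)
    (h : s * t * s * t = t * s * t * s) : dihedralLift s t hs ht h (.sr 0) = s := by
  change s * (s * t) ^ (0 : ZMod 4).val = s
  simp

lemma dihedralLift_sr_one {M : Type*} [Monoid M] (s t : M) (hs : s * s = 1) (ht : t * t = 1)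
    (h : s * t * s * t = t * s * t * s) : dihedralLift s t hs ht h (.sr 1) = t := by
  change s * (s * t) ^ 1 = t
  rw [pow_one, ← mul_assoc, hs, one_mul]

/-- The reflections `sr 0` and `sr 1` generate the dihedral group of order `8`. -/
lemma dihedral_hom_ext {M : Type*} [Monoid M] {f g : DihedralGroup 4 →* M}
    (h0 : f (.sr 0) = g (.sr 0)) (h1 : f (.sr 1) = g (.sr 1)) : f = g := by
  have hr (i : ZMod 4) : f (.r i) = g (.r i) := by
    have hi : (.r i : DihedralGroup 4) = (.sr 0 * .sr 1) ^ i.val := by revert i; decide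
    rw [hi, map_pow, map_pow, map_mul, map_mul, h0, h1]
  ext (i | i)
  · exact hr i
  · have hi : (.sr i : DihedralGroup 4) = .sr 0 * .r i := by simp
    rw [hi, map_mul, map_mul, h0, hr]

lemma add_self_eq_zero_of_zmod_two {A : Type*} [Ring A] [Algebra (ZMod 2) A] (z : A) :
    z + z = 0 := by
  rw [← two_smul (ZMod 2) z, show (2 : ZMod 2) = 0 from rfl, zero_smul]

/-- The quotient of the free `𝔽₂`-algebra on two generators `x`, `y` by the two-sided ideal
generated by `x·x`, `y·y` and `x·y·x·y + y·x·y·x` is isomorphic, as an `𝔽₂`-algebra, to the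
group algebra `𝔽₂[D₈]` of the dihedral group of order `8`. -/
theorem ringQuot_dihedralRel_algEquiv_monoidAlgebra_dihedralGroup :
    Nonempty (RingQuot DihedralRel ≃ₐ[ZMod 2] MonoidAlgebra (ZMod 2) (DihedralGroup 4)) := by
  let G := MonoidAlgebra (ZMod 2) (DihedralGroup 4)
  let Q := RingQuot DihedralRel
  have hG : ∀ z : G, z + z = 0 := add_self_eq_zero_of_zmod_two
  have hQ : ∀ z : Q, z + z = 0 := add_self_eq_zero_of_zmod_two
  let π : FreeAlgebra (ZMod 2) (Fin 2) →ₐ[ZMod 2] Q := RingQuot.mkAlgHom (ZMod 2) DihedralRel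
  let x : Q := π (ι (ZMod 2) 0)
  let y : Q := π (ι (ZMod 2) 1)
  have hx : x * x = 0 := by
    simpa [x, π] using RingQuot.mkAlgHom_rel (ZMod 2) DihedralRel.xx
  have hy : y * y = 0 := by
    simpa [y, π] using RingQuot.mkAlgHom_rel (ZMod 2) DihedralRel.yy
  have hxy : x * y * x * y + y * x * y * x = 0 := by
    simpa [x, y, π] using RingQuot.mkAlgHom_rel (ZMod 2) DihedralRel.mixed
  obtain ⟨hs, ht, hst⟩ := coxeter_of_mixed hQ hx hy hxy
  let e : DihedralGroup 4 →* G := MonoidAlgebra.of (ZMod 2) (DihedralGroup 4)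
  obtain ⟨hX, hY, hXY⟩ := mixed_of_coxeter hG (s := e (.sr 0)) (t := e (.sr 1))
    (by rw [← map_mul, ← map_one e]; rfl) (by rw [← map_mul, ← map_one e]; rfl)
    (by simp only [← map_mul]; rfl)
  let φ₀ : FreeAlgebra (ZMod 2) (Fin 2) →ₐ[ZMod 2] G :=
    FreeAlgebra.lift (ZMod 2) ![1 + e (.sr 0), 1 + e (.sr 1)]
  have hφ₀x : φ₀ (ι (ZMod 2) 0) = 1 + e (.sr 0) := FreeAlgebra.lift_ι_apply _ _
  have hφ₀y : φ₀ (ι (ZMod 2) 1) = 1 + e (.sr 1) := FreeAlgebra.lift_ι_apply _ _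
  have hφ₀ : ∀ ⦃a b⦄, DihedralRel a b → φ₀ a = φ₀ b := by
    rintro _ _ (_ | _ | _)
    · rw [map_mul, map_zero, hφ₀x, hX]
    · rw [map_mul, map_zero, hφ₀y, hY]
    · simp only [map_mul, map_add, map_zero, hφ₀x, hφ₀y, hXY]
  let φ : Q →ₐ[ZMod 2] G := RingQuot.liftAlgHom (ZMod 2) ⟨φ₀, hφ₀⟩
  have hφπ (a) : φ (π a) = φ₀ a := RingQuot.liftAlgHom_mkAlgHom_apply (ZMod 2) φ₀ hφ₀ a
  let ψ : G →ₐ[ZMod 2] Q :=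
    MonoidAlgebra.lift (ZMod 2) Q (DihedralGroup 4) (dihedralLift (1 + x) (1 + y) hs ht hst)
  have hψe (g) : ψ (e g) = dihedralLift (1 + x) (1 + y) hs ht hst g :=
    MonoidAlgebra.lift_of _ _
  have hψ0 : ψ (e (.sr 0)) = 1 + x := by rw [hψe, dihedralLift_sr_zero]
  have hψ1 : ψ (e (.sr 1)) = 1 + y := by rw [hψe, dihedralLift_sr_one]
  refine ⟨AlgEquiv.ofAlgHom φ ψ ?_ ?_⟩
  · apply MonoidAlgebra.algHom_ext'
    case single_one_left => exact Subsingleton.elim _ _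
    apply dihedral_hom_ext
    · change φ (ψ (e (.sr 0))) = e (.sr 0)
      rw [hψ0, map_add, map_one, hφπ, hφ₀x, ← add_assoc, hG, zero_add]
    · change φ (ψ (e (.sr 1))) = e (.sr 1)
      rw [hψ1, map_add, map_one, hφπ, hφ₀y, ← add_assoc, hG, zero_add]
  · apply RingQuot.ringQuot_ext'
    apply FreeAlgebra.hom_ext
    funext i
    fin_cases i
    · change ψ (φ (π (ι (ZMod 2) 0))) = x
      rw [hφπ, hφ₀x, map_add, map_one, hψ0, ← add_assoc, hQ, zero_add]
    · change ψ (φ (π (ι (ZMod 2) 1))) = y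
      rw [hφπ, hφ₀y, map_add, map_one, hψ1, ← add_assoc, hQ, zero_add]
end

section
/- Let H be a finite-dimensional cocommutative Hopf algebra over a field k. Then a finite-dimensional left H-module is projective if and only if it is injective. (In other words, the category of finite-dimensional H-modules is a Frobenius category: projectives and injectives coincide.) -/
/-!
Write `Δ(h) = h₁ ⊗ h₂` in the style of Sweedler; `S` is the antipode, and `(eᵢ)` is a basis of `H` with
dual basis `(eⁱ)`. No integrals are needed: the argument is an averaging one, in the style of
Maschke, with an explicit family of elements
`cⱼ = ∑ᵢ eⁱ(eᵢ₂ eⱼ) eᵢ₁ ⊗ S(eᵢ₃)` of `H ⊗ H` (`casimir`). They satisfy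

* `(h ⊗ 1) cⱼ = cⱼ (1 ⊗ h)` for all `h` (`casimir_comm`, where cocommutativity is used), and
* `∑ⱼ eʲ(b w) a = w` for all `w`, with `cⱼ = a ⊗ b` (`sum_evalRight_casimir`).

Projective implies injective: given `X ⊆ Y` and an `H`-linear `f : X → H`, choose a `k`-linear
extension `g : Y → H`. Then `y ↦ ∑ⱼ eʲ(g(b y)) a` is `H`-linear by the first property and extends
`f` by the second (`exists_extend_to_self`). Hence `H` is injective, and so are the direct
summands of its finite powers.

Injective implies projective: `S² = 1` by cocommutativity, so `a ⊗ b ↦ S(b) ⊗ S(a)` turns `cⱼ` into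
an element with the same commutation property (`casimirOp`), now normalised by
`∑ⱼ eʲ(S(x a)) b = x`. Averaging a `k`-linear lift with it shows that the coinduced module
`Hom_k(H, V)` is projective (`exists_lift_of_coind`). An injective `M` is a direct summand of
`Hom_k(H, M)`, in which it embeds by `m ↦ (x ↦ x m)`.
-/

open TensorProduct

namespace HopfFrobenius
open Coalgebra HopfAlgebra

/-! ### Sweedler identities -/

section Sweedler
variable {k H : Type*} [Field k] [Ring H] [HopfAlgebra k H]

lemma lTensor_linearMap_counit (h : H) :
    (Algebra.linearMap k H ∘ₗ counit).lTensor H (comul h) = h ⊗ₜ[k] 1 := by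
  rw [LinearMap.lTensor_comp, LinearMap.comp_apply, lTensor_counit_comul]
  simp

lemma rTensor_linearMap_counit (h : H) :
    (Algebra.linearMap k H ∘ₗ counit).rTensor H (comul h) = 1 ⊗ₜ[k] h := by
  rw [LinearMap.rTensor_comp, LinearMap.comp_apply, rTensor_counit_comul]
  simp

lemma lTensor_antipode_mul (h : H) :
    (LinearMap.mul' k H ∘ₗ (antipode k).rTensor H).lTensor H
      (comul.lTensor H (comul h)) = h ⊗ₜ[k] 1 := by
  rw [← LinearMap.comp_apply, ← LinearMap.lTensor_comp, LinearMap.comp_assoc,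
    mul_antipode_rTensor_comul, lTensor_linearMap_counit]

lemma lTensor_mul_antipode (h : H) :
    (LinearMap.mul' k H ∘ₗ (antipode k).lTensor H).lTensor H
      (comul.lTensor H (comul h)) = h ⊗ₜ[k] 1 := by
  rw [← LinearMap.comp_apply, ← LinearMap.lTensor_comp, LinearMap.comp_assoc,
    mul_antipode_lTensor_comul, lTensor_linearMap_counit]

lemma rTensor_mul_antipode (h : H) :
    (LinearMap.mul' k H ∘ₗ (antipode k).lTensor H).rTensor H
      (comul.rTensor H (comul h)) = 1 ⊗ₜ[k] h := by
  rw [← LinearMap.comp_apply, ← LinearMap.rTensor_comp, LinearMap.comp_assoc,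
    mul_antipode_lTensor_comul, rTensor_linearMap_counit]

/-- Cocommutativity lets the last two legs of the iterated comultiplication be exchanged. -/
lemma lTensor_comm_comul [IsCocomm k H] (h : H) :
    (TensorProduct.comm k H H).toLinearMap.lTensor H (comul.lTensor H (comul h)) =
      comul.lTensor H (comul h) := by
  rw [← LinearMap.comp_apply, ← LinearMap.lTensor_comp, IsCocomm.comm_comp_comul]

/-- `h₁ ⊗ S(h₃) h₂ = h ⊗ 1`. -/
lemma sum_antipode_right_mul_comul [IsCocomm k H] (h : H) :
    ∑ j ∈ (ℛ k h).index,
      ((1 : H) ⊗ₜ[k] antipode k ((ℛ k h).right j)) * comul ((ℛ k h).left j) = h ⊗ₜ[k] 1 := by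
  have key (a b : H) : ((1 : H) ⊗ₜ[k] antipode k b) * comul a =
      (LinearMap.mul' k H ∘ₗ (antipode k).rTensor H).lTensor H
        ((TensorProduct.comm k H H).toLinearMap.lTensor H
          (TensorProduct.assoc k H H H (comul.rTensor H (a ⊗ₜ b)))) := by
    rw [LinearMap.rTensor_tmul]
    induction comul (R := k) a with
    | zero => simp
    | tmul x y => simp
    | add x y hx hy => simp only [mul_add, add_tmul, map_add, hx, hy]
  simp_rw [key, ← map_sum, (ℛ k h).eq]
  rw [coassoc_apply, lTensor_comm_comul, lTensor_antipode_mul]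

/-- `h₁ S(h₃) ⊗ h₂ = 1 ⊗ h`. -/
lemma sum_comul_mul_antipode_right [IsCocomm k H] (h : H) :
    ∑ j ∈ (ℛ k h).index,
      comul ((ℛ k h).left j) * (antipode k ((ℛ k h).right j) ⊗ₜ[k] (1 : H)) = 1 ⊗ₜ[k] h := by
  have key (a b : H) : comul a * (antipode k b ⊗ₜ[k] (1 : H)) =
      (LinearMap.mul' k H ∘ₗ (antipode k).lTensor H).rTensor H
        ((TensorProduct.assoc k H H H).symm
        ((TensorProduct.comm k H H).toLinearMap.lTensor H
          (TensorProduct.assoc k H H H (comul.rTensor H (a ⊗ₜ b))))) := by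
    rw [LinearMap.rTensor_tmul]
    induction comul (R := k) a with
    | zero => simp
    | tmul x y => simp
    | add x y hx hy => simp only [add_mul, add_tmul, map_add, hx, hy]
  simp_rw [key, ← map_sum, (ℛ k h).eq]
  rw [coassoc_apply, lTensor_comm_comul, coassoc_symm_apply, rTensor_mul_antipode]

/-- `h₁ ⊗ S(h₂) h₃ = h ⊗ 1`. -/
lemma sum_lTensor_antipode_mul (h : H) :
    ∑ j ∈ (ℛ k h).index, (antipode k).lTensor H (comul ((ℛ k h).left j)) *
      ((1 : H) ⊗ₜ[k] (ℛ k h).right j) = h ⊗ₜ[k] 1 := by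
  have key (a b : H) : (antipode k).lTensor H (comul a) * ((1 : H) ⊗ₜ[k] b) =
      (LinearMap.mul' k H ∘ₗ (antipode k).rTensor H).lTensor H
          (TensorProduct.assoc k H H H (comul.rTensor H (a ⊗ₜ b))) := by
    rw [LinearMap.rTensor_tmul]
    induction comul (R := k) a with
    | zero => simp
    | tmul x y => simp
    | add x y hx hy => simp only [add_mul, add_tmul, map_add, hx, hy]
  simp_rw [key, ← map_sum, (ℛ k h).eq]
  rw [coassoc_apply, lTensor_antipode_mul]

/-- Both `S ∘ S` and the identity are convolution inverses of `S`. -/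
lemma antipode_antipode [IsCocomm k H] (h : H) : antipode k (antipode k h) = h := by
  have hS : (WithConv.toConv (antipode k ∘ₗ antipode k : H →ₗ[k] H)) *
      WithConv.toConv (antipode k) = 1 := by
    ext h
    have h1 : LinearMap.mul' k H ((antipode k).lTensor H (TensorProduct.comm k H H (comul h))) =
        algebraMap k H (counit h) := by
      rw [comm_comul, mul_antipode_lTensor_comul_apply]
    have h2 := congrArg (antipode k) h1
    rw [← (ℛ k h).eq] at h2
    rw [(ℛ k h).convMul_apply]
    simpa [antipode_mul_antidistrib, Algebra.algebraMap_eq_smul_one] using h2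
  have := left_inv_eq_right_inv hS LinearMap.antipode_mul_id
  exact congrArg (fun f => f.ofConv h) this

/-! ### Casimir elements -/

/-- The map `e ↦ e₁ ⊗ e₂ ⊗ S(e₃)`, written `γ` below. -/
noncomputable def gam : H →ₗ[k] (H ⊗[k] H) ⊗[k] H :=
  map comul (antipode k) ∘ₗ comul

/-- `γ(a e) = (Δ(a₁) ⊗ 1) γ(e) (1 ⊗ S(a₂))`. -/
lemma gam_mul (a e : H) : gam (k := k) (a * e) = ∑ j ∈ (ℛ k a).index,
    (comul ((ℛ k a).left j) ⊗ₜ[k] (1 : H)) * gam (k := k) e *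
      (1 ⊗ₜ[k] antipode k ((ℛ k a).right j)) := by
  simp only [gam, LinearMap.comp_apply, Bialgebra.comul_mul]
  rw [← (ℛ k a).eq, Finset.sum_mul, map_sum]
  refine Finset.sum_congr rfl fun j _ => ?_
  induction comul (R := k) e with
  | zero => simp
  | tmul x y => simp [antipode_mul_antidistrib]
  | add x y hx hy => simp only [mul_add, add_mul, map_add, hx, hy]

/-- `γ(h₁ e) (1 ⊗ h₂) = (Δ(h) ⊗ 1) γ(e)`. -/
lemma sum_gam_mul (h e : H) : ∑ j ∈ (ℛ k h).index,
    gam (k := k) ((ℛ k h).left j * e) * (1 ⊗ₜ[k] (ℛ k h).right j) =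
      (comul h ⊗ₜ[k] (1 : H)) * gam (k := k) e := by
  -- the map `x ⊗ y ↦ (Δ(x) ⊗ 1) γ(e) (1 ⊗ y)`
  let m : H ⊗[k] H →ₗ[k] (H ⊗[k] H) ⊗[k] H :=
    TensorProduct.lift ((LinearMap.mul k _).compl₁₂
      (LinearMap.mulRight k (gam (k := k) e) ∘ₗ (TensorProduct.mk k (H ⊗[k] H) H).flip 1 ∘ₗ comul)
      (TensorProduct.mk k (H ⊗[k] H) H 1))
  have hm (x y : H) : m (x ⊗ₜ y) =
      (comul x ⊗ₜ[k] (1 : H)) * gam (k := k) e * (1 ⊗ₜ[k] y) := by simp [m]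
  have key (a b : H) : gam (k := k) (a * e) * (1 ⊗ₜ[k] b) =
      m ((antipode k).lTensor H (comul a) * ((1 : H) ⊗ₜ[k] b)) := by
    rw [gam_mul, ← (ℛ k a).eq]
    simp [Finset.sum_mul, hm, mul_assoc]
  simp_rw [key, ← map_sum, sum_lTensor_antipode_mul, hm]
  rw [← Algebra.TensorProduct.one_def, mul_one]

/-- The contraction `a ⊗ b ⊗ c ↦ β(b) a ⊗ c`. -/
noncomputable def contr (β : H →ₗ[k] k) : (H ⊗[k] H) ⊗[k] H →ₗ[k] H ⊗[k] H :=
  ((TensorProduct.rid k H).toLinearMap ∘ₗ β.lTensor H).rTensor H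

@[simp] lemma contr_tmul (β : H →ₗ[k] k) (a b c : H) :
    contr β ((a ⊗ₜ b) ⊗ₜ c) = β b • (a ⊗ₜ[k] c) := by
  simp [contr, smul_tmul']

lemma contr_mul_left (β : H →ₗ[k] k) (h : H) (u : (H ⊗[k] H) ⊗[k] H) :
    contr β (((h ⊗ₜ[k] (1 : H)) ⊗ₜ[k] (1 : H)) * u) = (h ⊗ₜ[k] (1 : H)) * contr β u := by
  induction u with
  | zero => simp
  | add x y hx hy => simp only [mul_add, map_add, hx, hy]
  | tmul x c =>
    induction x with
    | zero => simp
    | add x y hx hy => simp only [mul_add, add_tmul, map_add, hx, hy]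
    | tmul a b => simp

lemma contr_mul_right (β : H →ₗ[k] k) (h : H) (u : (H ⊗[k] H) ⊗[k] H) :
    contr β (u * (1 ⊗ₜ[k] h)) = contr β u * (1 ⊗ₜ[k] h) := by
  induction u with
  | zero => simp
  | add x y hx hy => simp only [add_mul, map_add, hx, hy]
  | tmul x c =>
    induction x with
    | zero => simp
    | add x y hx hy => simp only [add_mul, add_tmul, map_add, hx, hy]
    | tmul a b => simp

lemma contr_mul_middle (β : H →ₗ[k] k) (s : H) (u : (H ⊗[k] H) ⊗[k] H) :
    contr β ((((1 : H) ⊗ₜ[k] s) ⊗ₜ[k] (1 : H)) * u) = contr (β ∘ₗ LinearMap.mulLeft k s) u := by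
  induction u with
  | zero => simp
  | add x y hx hy => simp only [mul_add, map_add, hx, hy]
  | tmul x c =>
    induction x with
    | zero => simp
    | add x y hx hy => simp only [mul_add, add_tmul, map_add, hx, hy]
    | tmul a b => simp

/-- `contr` as a linear map in both arguments. -/
noncomputable def contrₗ : (H →ₗ[k] k) →ₗ[k] (H ⊗[k] H) ⊗[k] H →ₗ[k] H ⊗[k] H where
  toFun := contr
  map_add' β β' := by ext; simp [add_smul]
  map_smul' c β := by ext; simp [mul_smul]

variable {ι : Type*} [Fintype ι] (e : Module.Basis ι k H)

/-- Cyclicity of the trace, for bilinear pairings of `H*` and `H` with values in an arbitrary space. -/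
lemma sum_coord_comp {V : Type*} [AddCommGroup V] [Module k V]
    (B : (H →ₗ[k] k) →ₗ[k] H →ₗ[k] V) (L : H →ₗ[k] H) :
    ∑ i, B (e.coord i ∘ₗ L) (e i) = ∑ i, B (e.coord i) (L (e i)) := by
  have h1 (i : ι) : e.coord i ∘ₗ L = ∑ j, e.coord i (L (e j)) • e.coord j := by
    refine e.ext fun l => ?_
    classical
    simp [Finsupp.single_apply]
  have h2 (j : ι) : L (e j) = ∑ i, e.coord i (L (e j)) • e i := by
    simp
  simp_rw [h1]
  simp only [map_sum, LinearMap.sum_apply, map_smul, LinearMap.smul_apply]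
  rw [Finset.sum_comm]
  refine Finset.sum_congr rfl fun j _ => ?_
  conv_rhs => rw [h2 j]
  simp only [map_sum, map_smul]

/-- The partial trace over `x` of `x ↦ (tx)₁ ⊗ (tx)₂ w ⊗ S((tx)₃)`, the middle leg being the one
that is traced out. -/
noncomputable def casimir (w : H) : H →ₗ[k] H ⊗[k] H :=
  ∑ i, contr (e.coord i ∘ₗ LinearMap.mulRight k w) ∘ₗ gam ∘ₗ LinearMap.mulRight k (e i)

lemma casimir_apply (w t : H) : casimir e w t =
    ∑ i, contr (e.coord i ∘ₗ LinearMap.mulRight k w) (gam (t * e i)) := by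
  simp [casimir]

/-- Since the middle leg is traced out, a right factor `s` of the argument may be moved to the left
of that leg. -/
lemma casimir_mul (w t s : H) : casimir e w (t * s) =
    ∑ i, contr (e.coord i ∘ₗ LinearMap.mulRight k w)
      ((((1 : H) ⊗ₜ[k] s) ⊗ₜ[k] (1 : H)) * gam (t * e i)) := by
  have := sum_coord_comp e (((contrₗ (k := k) (H := H)).compl₁₂
    (LinearMap.lcomp k k (LinearMap.mulRight k w)) (gam ∘ₗ LinearMap.mulLeft k t)))
    (LinearMap.mulLeft k s)
  simp only [LinearMap.compl₁₂_apply, contrₗ, LinearMap.coe_mk, AddHom.coe_mk,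
    LinearMap.lcomp_apply', LinearMap.comp_apply, LinearMap.mulLeft_apply] at this
  simp_rw [casimir_apply, contr_mul_middle, mul_assoc, ← this]
  refine Finset.sum_congr rfl fun i _ => ?_
  congr 1
  congr 1
  ext x
  simp [mul_assoc]

/-- The Casimir property `(h ⊗ 1) c = c (1 ⊗ h)`. With `h ⊗ 1 = h₁ ⊗ S(h₃) h₂`, the left side is
obtained from `γ` of basis vectors by multiplying with `Δ(h₁)`, which `sum_gam_mul` absorbs at the
cost of a factor on the right; the remaining `S(h₃)` in the middle leg moves into the argument by
`casimir_mul`, where `h₁ S(h₃) ⊗ h₂ = 1 ⊗ h` applies. -/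
theorem casimir_comm [IsCocomm k H] (w h : H) :
    (h ⊗ₜ[k] (1 : H)) * casimir e w 1 = casimir e w 1 * (1 ⊗ₜ[k] h) := by
  -- the map `x ⊗ y ↦ casimir x * (1 ⊗ y)`
  let m : H ⊗[k] H →ₗ[k] H ⊗[k] H := TensorProduct.lift ((LinearMap.mul k _).compl₁₂
      (casimir e w) (TensorProduct.mk k H H 1))
  have hm (x y : H) : m (x ⊗ₜ y) = casimir e w x * (1 ⊗ₜ[k] y) := by simp [m]
  have hR : casimir e w 1 * (1 ⊗ₜ[k] h) = ∑ j ∈ (ℛ k h).index,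
      ∑ l ∈ (ℛ k ((ℛ k h).left j)).index,
        casimir e w ((ℛ k ((ℛ k h).left j)).left l * antipode k ((ℛ k h).right j)) *
          (1 ⊗ₜ[k] (ℛ k ((ℛ k h).left j)).right l) := by
    rw [← hm, ← sum_comul_mul_antipode_right, map_sum]
    refine Finset.sum_congr rfl fun j _ => ?_
    conv_lhs => rw [← (ℛ k ((ℛ k h).left j)).eq]
    simp [Finset.sum_mul, hm]
  have hL : (h ⊗ₜ[k] (1 : H)) * casimir e w 1 = ∑ j ∈ (ℛ k h).index, ∑ i,
      contr (e.coord i ∘ₗ LinearMap.mulRight k w)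
        ((((1 : H) ⊗ₜ[k] antipode k ((ℛ k h).right j)) ⊗ₜ[k] (1 : H)) *
          ((comul ((ℛ k h).left j) ⊗ₜ[k] (1 : H)) * gam (k := k) (e i))) := by
    rw [casimir_apply, Finset.mul_sum, Finset.sum_comm]
    refine Finset.sum_congr rfl fun i _ => ?_
    rw [← contr_mul_left, ← sum_antipode_right_mul_comul, sum_tmul, Finset.sum_mul, map_sum]
    simp [← mul_assoc]
  rw [hL, hR]
  refine Finset.sum_congr rfl fun j _ => ?_
  simp_rw [← sum_gam_mul, casimir_mul, Finset.mul_sum, map_sum, Finset.sum_mul]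
  rw [Finset.sum_comm]
  simp_rw [← mul_assoc, contr_mul_right]

/-- `x₁ ⊗ x₂ S(x₃) = x ⊗ 1`. -/
lemma lTensor_mul'_gam (x : H) :
    (LinearMap.mul' k H).lTensor H (TensorProduct.assoc k H H H (gam x)) = x ⊗ₜ[k] 1 := by
  rw [← lTensor_mul_antipode, ← coassoc_apply, gam, LinearMap.comp_apply]
  induction comul (R := k) x with
  | zero => simp
  | add x y hx hy => simp only [map_add, hx, hy]
  | tmul a b =>
    simp only [map_tmul, LinearMap.rTensor_tmul]
    induction comul (R := k) a with
    | zero => simp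
    | add x y hx hy => simp only [add_tmul, map_add, hx, hy]
    | tmul a b => simp

/-- The map `a ⊗ b ↦ φ(b) a`. -/
noncomputable def evalRight (φ : H →ₗ[k] k) : H ⊗[k] H →ₗ[k] H :=
  (TensorProduct.rid k H).toLinearMap ∘ₗ φ.lTensor H

@[simp] lemma evalRight_tmul (φ : H →ₗ[k] k) (a b : H) :
    evalRight φ (a ⊗ₜ b) = φ b • a := by
  simp [evalRight]

lemma evalRight_mul_left (φ : H →ₗ[k] k) (h : H) (u : H ⊗[k] H) :
    evalRight φ ((h ⊗ₜ[k] (1 : H)) * u) = h * evalRight φ u := by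
  induction u with
  | zero => simp
  | add x y hx hy => simp only [mul_add, map_add, hx, hy]
  | tmul a b => simp

lemma evalRight_mul_right (φ : H →ₗ[k] k) (h : H) (u : H ⊗[k] H) :
    evalRight φ (u * ((1 : H) ⊗ₜ[k] h)) = evalRight (φ ∘ₗ LinearMap.mulRight k h) u := by
  induction u with
  | zero => simp
  | add x y hx hy => simp only [add_mul, map_add, hx, hy]
  | tmul a b => simp

/-- The normalisation of the Casimir elements. Summing over `j` multiplies the last two legs of `γ`
together, and `x₁ ⊗ x₂ S(x₃) = x ⊗ 1` reduces the sum to the expansion of `w` in the basis. -/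
theorem sum_evalRight_casimir (w : H) :
    ∑ j, evalRight (e.coord j ∘ₗ LinearMap.mulRight k w) (casimir e (e j) 1) = w := by
  have key (i : ι) (u : (H ⊗[k] H) ⊗[k] H) :
      ∑ j, evalRight (e.coord j ∘ₗ LinearMap.mulRight k w)
        (contr (e.coord i ∘ₗ LinearMap.mulRight k (e j)) u) =
      evalRight (e.coord i ∘ₗ LinearMap.mulRight k w)
        ((LinearMap.mul' k H).lTensor H (TensorProduct.assoc k H H H u)) := by
    induction u with
    | zero => simp
    | add x y hx hy => simp only [map_add, Finset.sum_add_distrib, hx, hy]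
    | tmul x c =>
      induction x with
      | zero => simp
      | add x y hx hy => simp only [add_tmul, map_add, Finset.sum_add_distrib, hx, hy]
      | tmul a b =>
        have hb : b * c * w = ∑ j, e.coord j (c * w) • (b * e j) := by
          conv_lhs => rw [mul_assoc, ← e.sum_repr (c * w), Finset.mul_sum]
          simp
        simp only [contr_tmul, map_smul, evalRight_tmul, assoc_tmul, LinearMap.lTensor_tmul,
          LinearMap.mul'_apply, LinearMap.comp_apply, LinearMap.mulRight_apply, hb, map_sum,
          Finset.sum_smul, smul_smul, smul_eq_mul]
        exact Finset.sum_congr rfl fun j _ => by rw [mul_comm]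
  simp_rw [casimir_apply, map_sum, one_mul]
  rw [Finset.sum_comm]
  simp_rw [key, lTensor_mul'_gam, evalRight_tmul, LinearMap.comp_apply, LinearMap.mulRight_apply,
    one_mul]
  simp

/-- The image of the Casimir element under `a ⊗ b ↦ S(b) ⊗ S(a)`. -/
noncomputable def casimirOp (w : H) : H ⊗[k] H :=
  map (antipode k) (antipode k) (TensorProduct.comm k H H (casimir e w 1))

theorem casimirOp_comm [IsCocomm k H] (w h : H) :
    (h ⊗ₜ[k] (1 : H)) * casimirOp e w = casimirOp e w * (1 ⊗ₜ[k] h) := by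
  have h1 (s : H) (u : H ⊗[k] H) : (antipode k s ⊗ₜ[k] (1 : H)) *
      map (antipode k) (antipode k) (TensorProduct.comm k H H u) =
      map (antipode k) (antipode k) (TensorProduct.comm k H H (u * (1 ⊗ₜ[k] s))) := by
    induction u with
    | zero => simp
    | add x y hx hy => simp only [mul_add, add_mul, map_add, hx, hy]
    | tmul a b => simp [antipode_mul_antidistrib]
  have h2 (s : H) (u : H ⊗[k] H) :
      map (antipode k) (antipode k) (TensorProduct.comm k H H u) * (1 ⊗ₜ[k] antipode k s) =
      map (antipode k) (antipode k) (TensorProduct.comm k H H ((s ⊗ₜ[k] 1) * u)) := by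
    induction u with
    | zero => simp
    | add x y hx hy => simp only [mul_add, add_mul, map_add, hx, hy]
    | tmul a b => simp [antipode_mul_antidistrib]
  rw [← antipode_antipode (k := k) h, casimirOp, h1, h2, casimir_comm]

/-- The map `a ⊗ b ↦ a • G(b)`. -/
noncomputable def evalLeft {Y : Type*} [AddCommGroup Y] [Module k Y] [Module H Y]
    [IsScalarTower k H Y] (G : H →ₗ[k] Y) : H ⊗[k] H →ₗ[k] Y :=
  TensorProduct.lift ((Algebra.lsmul k k Y).toLinearMap.compl₂ G)

section evalLeft
variable {Y : Type*} [AddCommGroup Y] [Module k Y] [Module H Y] [IsScalarTower k H Y]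

@[simp] lemma evalLeft_tmul (G : H →ₗ[k] Y) (a b : H) : evalLeft G (a ⊗ₜ b) = a • G b := by
  simp [evalLeft]

lemma evalLeft_add (G G' : H →ₗ[k] Y) (u : H ⊗[k] H) :
    evalLeft (G + G') u = evalLeft G u + evalLeft G' u := by
  induction u with
  | zero => simp
  | add x y hx hy => simp only [map_add, hx, hy]; abel
  | tmul a b => simp

lemma evalLeft_mul_left (G : H →ₗ[k] Y) (h : H) (u : H ⊗[k] H) :
    evalLeft G ((h ⊗ₜ[k] (1 : H)) * u) = h • evalLeft G u := by
  induction u with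
  | zero => simp
  | add x y hx hy => simp only [mul_add, map_add, smul_add, hx, hy]
  | tmul a b => simp [mul_smul]

lemma evalLeft_mul_right (G : H →ₗ[k] Y) (h : H) (u : H ⊗[k] H) :
    evalLeft G (u * ((1 : H) ⊗ₜ[k] h)) = evalLeft (G ∘ₗ LinearMap.mulRight k h) u := by
  induction u with
  | zero => simp
  | add x y hx hy => simp only [add_mul, map_add, hx, hy]
  | tmul a b => simp

end evalLeft

/-- The map `a ⊗ b ↦ φ(a) b`. -/
noncomputable def contrLeft (φ : H →ₗ[k] k) : H ⊗[k] H →ₗ[k] H :=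
  (TensorProduct.lid k H).toLinearMap ∘ₗ φ.rTensor H

@[simp] lemma contrLeft_tmul (φ : H →ₗ[k] k) (a b : H) :
    contrLeft φ (a ⊗ₜ b) = φ a • b := by
  simp [contrLeft]

/-- The normalisation `sum_evalRight_casimir`, transported along the antipode. -/
theorem sum_contrLeft_casimirOp [IsCocomm k H] (x : H) :
    ∑ j, contrLeft (e.coord j ∘ₗ antipode k ∘ₗ LinearMap.mulLeft k x) (casimirOp e (e j)) = x := by
  have key (j : ι) (u : H ⊗[k] H) :
      contrLeft (e.coord j ∘ₗ antipode k ∘ₗ LinearMap.mulLeft k x)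
        (map (antipode k) (antipode k) (TensorProduct.comm k H H u)) =
      antipode k (evalRight (e.coord j ∘ₗ LinearMap.mulRight k (antipode k x)) u) := by
    induction u with
    | zero => simp
    | add x y hx hy => simp only [map_add, hx, hy]
    | tmul a b => simp [antipode_mul_antidistrib, antipode_antipode]
  simp_rw [casimirOp, key, ← map_sum, sum_evalRight_casimir, antipode_antipode]

end Sweedler

/-! ### Projective modules are injective -/

section Injective
variable {k H : Type*} [Field k] [Ring H] [HopfAlgebra k H] [FiniteDimensional k H] [IsCocomm k H]

/-- Injectivity of `H`: a `k`-linear extension `g : Y → H` of `f` is averaged to the `H`-linear map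
`y ↦ ∑ⱼ ∑ eʲ(g(b y)) a`, where `∑ a ⊗ b` is the Casimir element of `eⱼ`. -/
theorem exists_extend_to_self {X Y : Type*} [AddCommGroup X] [AddCommGroup Y] [Module H X]
    [Module H Y] [Module k X] [Module k Y] [IsScalarTower k H X] [IsScalarTower k H Y]
    (i : X →ₗ[H] Y) (hi : Function.Injective i) (f : X →ₗ[H] H) :
    ∃ F : Y →ₗ[H] H, ∀ x, F (i x) = f x := by
  let e := Module.finBasis k H
  obtain ⟨q, hq⟩ := (i.restrictScalars k).exists_leftInverse_of_injective
    (LinearMap.ker_eq_bot.mpr hi)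
  let g : Y →ₗ[k] H := f.restrictScalars k ∘ₗ q
  have hg (x : X) : g (i x) = f x := congrArg f (LinearMap.congr_fun hq x)
  -- `φ j y` is the functional `b ↦ eʲ(g(b y))`
  let φ (j) (y : Y) : H →ₗ[k] k :=
    e.coord j ∘ₗ g ∘ₗ (LinearMap.toSpanSingleton H Y y).restrictScalars k
  refine ⟨⟨⟨fun y => ∑ j, evalRight (φ j y) (casimir e (e j) 1), fun y y' => ?_⟩, fun h y => ?_⟩,
    fun x => ?_⟩
  · have hφ (j) : φ j (y + y') = φ j y + φ j y' := by ext; simp [φ]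
    simp [hφ, evalRight, LinearMap.lTensor_add, Finset.sum_add_distrib]
  · have hφ (j) : φ j (h • y) = φ j y ∘ₗ LinearMap.mulRight k h := by ext; simp [φ, mul_smul]
    simp [hφ, ← evalRight_mul_right, ← casimir_comm, evalRight_mul_left, Finset.mul_sum]
  · have hφ (j) : φ j (i x) = e.coord j ∘ₗ LinearMap.mulRight k (f x) := by
      ext b
      change e.coord j (g (b • i x)) = e.coord j (b * f x)
      rw [← map_smul i, hg, map_smul, smul_eq_mul]
    change ∑ j, evalRight (φ j (i x)) (casimir e (e j) 1) = f x
    simp_rw [hφ, sum_evalRight_casimir]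

end Injective

/-- A splitting `M → Hⁿ → M` reduces the extension problem to the coordinates in `H`. -/
theorem injective_of_projective (k : Type*) {H : Type*} [Field k] [Ring H] [HopfAlgebra k H]
    [FiniteDimensional k H] [IsCocomm k H]
    (M : Type*) [AddCommGroup M] [Module H M] [Module.Finite H M]
    [Module.Projective H M] : Module.Injective H M where
  out X Y _ _ _ _ i hi f := by
    let _ : Module k X := Module.compHom X (algebraMap k H)
    let _ : Module k Y := Module.compHom Y (algebraMap k H)
    have : IsScalarTower k H X := ⟨fun c h x => by
      rw [Algebra.smul_def, mul_smul]; rfl⟩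
    have : IsScalarTower k H Y := ⟨fun c h x => by
      rw [Algebra.smul_def, mul_smul]; rfl⟩
    obtain ⟨n, p, hp⟩ := Module.Finite.exists_fin' H M
    obtain ⟨s, hs⟩ := Module.projective_lifting_property p LinearMap.id hp
    choose F hF using fun l : Fin n =>
      exists_extend_to_self (k := k) i hi (LinearMap.proj l ∘ₗ s ∘ₗ f)
    refine ⟨p ∘ₗ LinearMap.pi F, fun x => ?_⟩
    have : LinearMap.pi F (i x) = s (f x) := by
      ext l
      simp [hF]
    rw [LinearMap.comp_apply, this]
    exact LinearMap.congr_fun hs (f x)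

/-! ### Injective modules are projective -/

section Projective

/-- The coinduced module `Hom_k(H, M)`, on which `H` acts by `(h T)(x) = T(x h)`; a synonym is used
because `H →ₗ[k] M` already carries the action on the values. -/
def Coind (k H M : Type*) [Field k] [Ring H] [Algebra k H] [AddCommGroup M] [Module k M] :=
  H →ₗ[k] M

namespace Coind
variable {k H M : Type*} [Field k] [Ring H] [Algebra k H] [AddCommGroup M] [Module k M]

noncomputable instance : AddCommGroup (Coind k H M) :=
  inferInstanceAs (AddCommGroup (H →ₗ[k] M))

noncomputable instance : Module k (Coind k H M) :=
  inferInstanceAs (Module k (H →ₗ[k] M))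

noncomputable instance : Module H (Coind k H M) where
  smul h T := (T : H →ₗ[k] M) ∘ₗ LinearMap.mulRight k h
  one_smul T := LinearMap.ext fun x => congrArg (show H →ₗ[k] M from T) (mul_one x)
  mul_smul h h' T := LinearMap.ext fun x => congrArg (show H →ₗ[k] M from T) (mul_assoc x h h').symm
  smul_zero _ := rfl
  smul_add _ _ _ := rfl
  add_smul h h' T := LinearMap.ext fun x =>
    (congrArg (show H →ₗ[k] M from T) (mul_add x h h')).trans
      (LinearMap.map_add (show H →ₗ[k] M from T) _ _)
  zero_smul T := LinearMap.ext fun x =>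
    (congrArg (show H →ₗ[k] M from T) (mul_zero x)).trans
      (LinearMap.map_zero (show H →ₗ[k] M from T))

/-- The identification of `Coind k H M` with `H →ₗ[k] M`. -/
noncomputable def toLin : Coind k H M ≃ₗ[k] (H →ₗ[k] M) := LinearEquiv.refl k _

@[simp] lemma toLin_smul (h : H) (T : Coind k H M) (x : H) :
    toLin (h • T) x = toLin T (x * h) := rfl

instance : IsScalarTower k H (Coind k H M) where
  smul_assoc c h T := toLin.injective <| LinearMap.ext fun x => by
    simp

/-- The embedding `m ↦ (x ↦ x m)` of a module into its coinduced module. -/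
noncomputable def unit [Module H M] [IsScalarTower k H M] : M →ₗ[H] Coind k H M where
  toFun m := toLin.symm ((LinearMap.toSpanSingleton H M m).restrictScalars k)
  map_add' m m' := toLin.injective <| LinearMap.ext fun x => by simp
  map_smul' h m := toLin.injective <| LinearMap.ext fun x => by simp [mul_smul]

lemma toLin_unit [Module H M] [IsScalarTower k H M] (m : M) (x : H) :
    toLin (unit (k := k) (H := H) m) x = x • m := rfl

end Coind

variable {k H : Type*} [Field k] [Ring H] [HopfAlgebra k H] [FiniteDimensional k H] [IsCocomm k H]

/-- Projectivity of coinduced modules: a `k`-linear lift `g` of `r` is averaged to the `H`-linear map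
`T ↦ ∑ⱼ ∑ a • g(x ↦ eʲ(S(x)) T(b))`, where `∑ a ⊗ b` is `casimirOp e (e j)`. -/
theorem exists_lift_of_coind {V M Y : Type*} [AddCommGroup V] [Module k V]
    [AddCommGroup M] [Module H M] [Module k M] [IsScalarTower k H M]
    [AddCommGroup Y] [Module H Y] [Module k Y] [IsScalarTower k H Y]
    (p : Y →ₗ[H] M) (hp : Function.Surjective p) (r : Coind k H V →ₗ[H] M) :
    ∃ F : Coind k H V →ₗ[H] Y, ∀ T, p (F T) = r T := by
  let e := Module.finBasis k H
  obtain ⟨q, hq⟩ := (p.restrictScalars k).exists_rightInverse_of_surjective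
    (LinearMap.range_eq_top.mpr hp)
  let g : Coind k H V →ₗ[k] Y := q ∘ₗ r.restrictScalars k
  have hg (T) : p (g T) = r T := LinearMap.congr_fun hq (r T)
  -- `E j v` is the map `x ↦ eʲ(S(x)) v`
  let E (j) : V →ₗ[k] Coind k H V := Coind.toLin.symm.toLinearMap ∘ₗ
    LinearMap.smulRightₗ (e.coord j ∘ₗ antipode k)
  have hE (j) (v : V) (x : H) : Coind.toLin (E j v) x = e.coord j (antipode k x) • v := rfl
  let G (j) (T : Coind k H V) : H →ₗ[k] Y := g ∘ₗ E j ∘ₗ Coind.toLin T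
  refine ⟨⟨⟨fun T => ∑ j, evalLeft (G j T) (casimirOp e (e j)), fun T T' => ?_⟩, fun h T => ?_⟩,
    fun T => ?_⟩
  · have hG (j) : G j (T + T') = G j T + G j T' := by ext; simp [G]
    simp [hG, evalLeft_add, Finset.sum_add_distrib]
  · have hG (j) : G j (h • T) = G j T ∘ₗ LinearMap.mulRight k h := by ext; simp [G]
    simp [hG, ← evalLeft_mul_right, ← casimirOp_comm, evalLeft_mul_left, Finset.smul_sum]
  · have h1 (j) (u : H ⊗[k] H) : p (evalLeft (G j T) u) =
        r (evalLeft (E j ∘ₗ Coind.toLin T) u) := by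
      induction u with
      | zero => simp
      | add x y hx hy => simp only [map_add, hx, hy]
      | tmul a b => simp [G, hg]
    have h2 (j) (u : H ⊗[k] H) (x : H) : Coind.toLin (evalLeft (E j ∘ₗ Coind.toLin T) u) x =
        Coind.toLin T (contrLeft (e.coord j ∘ₗ antipode k ∘ₗ LinearMap.mulLeft k x) u) := by
      induction u with
      | zero => simp
      | add x y hx hy => simp only [map_add, LinearMap.add_apply, hx, hy]
      | tmul a b => simp [hE]
    change p (∑ j, evalLeft (G j T) (casimirOp e (e j))) = r T
    simp_rw [map_sum, h1, ← map_sum]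
    congr 1
    refine Coind.toLin.injective (LinearMap.ext fun x => ?_)
    simp_rw [map_sum, LinearMap.sum_apply, h2, ← map_sum, sum_contrLeft_casimirOp]

/-- An injective `M` is a direct summand of its coinduced module, and the retraction lifts along the
free cover of `M`. -/
theorem projective_of_injective (M : Type*) [AddCommGroup M] [Module k M] [Module H M]
    [IsScalarTower k H M] [Module.Injective H M] : Module.Projective H M := by
  -- `Module.Injective` only tests modules in the universe of `M`, hence the use of `Shrink`
  have : Small.{_} (Coind k H M) :=
    small_of_injective (β := Fin _ → M) (((Module.finBasis k H).constr k).symm.injective)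
  let sh := Shrink.linearEquiv H (Coind k H M)
  obtain ⟨r, hr⟩ := Module.Injective.out (sh.symm.toLinearMap ∘ₗ Coind.unit (k := k) (H := H))
    (sh.symm.injective.comp fun m m' h => by
      have := congrArg (fun T => Coind.toLin T 1) h
      simpa [Coind.toLin_unit] using this) (LinearMap.id : M →ₗ[H] M)
  obtain ⟨F, hF⟩ := exists_lift_of_coind (k := k) (Finsupp.linearCombination H (id : M → M))
    (Finsupp.linearCombination_id_surjective H M) (r ∘ₗ sh.symm.toLinearMap)
  exact ⟨F ∘ₗ Coind.unit, fun m => (hF _).trans (hr m)⟩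

end Projective

end HopfFrobenius

/-- Let `H` be a finite-dimensional cocommutative Hopf algebra over a field `k`.  Then a
finite-dimensional left `H`-module is projective if and only if it is injective; i.e. the
category of finite-dimensional `H`-modules is a Frobenius category. -/
theorem projective_iff_injective_module_of_finiteDimensional_cocomm_hopf
    {k H : Type*} [Field k] [Ring H] [HopfAlgebra k H] [FiniteDimensional k H]
    (hcocomm : (TensorProduct.comm k H H).toLinearMap ∘ₗ Coalgebra.comul =
      (Coalgebra.comul : H →ₗ[k] H ⊗[k] H))
    (M : Type*) [AddCommGroup M] [Module k M] [Module H M] [IsScalarTower k H M]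
    [FiniteDimensional k M] :
    Module.Projective H M ↔ Module.Injective H M := by
  have : Coalgebra.IsCocomm k H := ⟨hcocomm⟩
  have : Module.Finite H M := Module.Finite.of_restrictScalars_finite k H M
  exact ⟨fun _ => HopfFrobenius.injective_of_projective k M,
    fun _ => HopfFrobenius.projective_of_injective (k := k) M⟩
end

section
/- Let H be a finite-dimensional cocommutative Hopf algebra over a field k with antipode S. Equip the k-linear dual H* = Hom_k(H, k) with the left H-module structure given by (h · f)(x) = f(S(h)·x) for h, x ∈ H and f ∈ H*. Then H* is a projective left H-module. -/
/-!
The action map `π : H ⊗ H* → H*`, `h ⊗ f ↦ h · f`, is an `H`-linear surjection from a free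
`H`-module (`H` acts on the left factor only), so it suffices to split it `H`-linearly.
The section factors through `H ⊗ H*` with the diagonal action `h ▷ (g ⊗ f) = h₁ g ⊗ h₂ · f`:

* `coev : H* → H ⊗ H*` sends `f` to the tensor that represents the endomorphism
  `x ↦ f(x₂) x₁` of `H`. It intertwines the given action with the diagonal one. The identity
  behind this is `1 ⊗ S(h) = (h₁ ⊗ 1) Δ(S(h₂))`, which is where cocommutativity enters.
* `untwist : H ⊗ H* → H ⊗ H*`, `g ⊗ f ↦ g₁ ⊗ S(g₂) · f`, intertwines the diagonal action with
  the action on the left factor.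

Since `g₁ S(g₂) = ε(g)`, the composite `π ∘ untwist` is `ε ⊗ id`, and `ε ⊗ id` sends `coev f` to
`x ↦ f(x₂) ε(x₁) = f(x)`. Hence `untwist ∘ coev` is a section of `π`.
-/

open TensorProduct

namespace DualProjective

open Coalgebra HopfAlgebra WithConv

variable {k H : Type*} [Field k] [Ring H] [HopfAlgebra k H]

variable (k H) in
/-- The action of `H` on its linear dual, `(h · f)(x) = f (S(h) x)`, as a linear map into
endomorphisms. -/
noncomputable def dualAct : H →ₗ[k] Module.End k (Module.Dual k H) :=
  Module.Dual.transpose ∘ₗ LinearMap.mul k H ∘ₗ antipode k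

@[simp] lemma dualAct_apply (h : H) (f : Module.Dual k H) (x : H) :
    dualAct k H h f x = f (antipode k h * x) := rfl

lemma dualAct_mul (g h : H) : dualAct k H (g * h) = dualAct k H g * dualAct k H h := by
  ext f x
  simp [antipode_mul_antidistrib, mul_assoc]

/-- The diagonal action of `H` on `H ⊗ H*`, `h ▷ (g ⊗ f) = h₁ g ⊗ h₂ · f`. -/
noncomputable def diag (h : H) : Module.End k (H ⊗[k] Module.Dual k H) :=
  TensorProduct.homTensorHomMap (RingHom.id k) _ _ _ _
    (TensorProduct.map (LinearMap.mul k H) (dualAct k H) (comul h))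

/-- `u ⊗ v ↦ u ⊗ S(v) · f`. -/
noncomputable def untwistAux (f : Module.Dual k H) : H ⊗[k] H →ₗ[k] H ⊗[k] Module.Dual k H :=
  TensorProduct.map LinearMap.id ((dualAct k H).flip f ∘ₗ antipode k)

/-- The map `g ⊗ f ↦ g₁ ⊗ S(g₂) · f`. -/
noncomputable def untwist : H ⊗[k] Module.Dual k H →ₗ[k] H ⊗[k] Module.Dual k H :=
  (TensorProduct.map LinearMap.id
      (TensorProduct.lift (dualAct k H ∘ₗ antipode k))) ∘ₗ
    (TensorProduct.assoc k H H (Module.Dual k H)).toLinearMap ∘ₗ comul.rTensor _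

lemma untwist_tmul (g : H) (f : Module.Dual k H) :
    untwist (g ⊗ₜ[k] f) = untwistAux f (comul g) := by
  simp only [untwist, LinearMap.comp_apply, LinearMap.rTensor_tmul, LinearEquiv.coe_coe]
  induction comul (R := k) g with
  | zero => simp
  | tmul u v => simp [untwistAux]
  | add a b ha hb => simp only [add_tmul, map_add, ha, hb]

lemma diag_tmul (h g : H) (f : Module.Dual k H) :
    diag h (g ⊗ₜ[k] f) =
      TensorProduct.map (LinearMap.mulRight k g) ((dualAct k H).flip f) (comul h) := by
  simp only [diag]
  induction comul (R := k) h with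
  | zero => simp
  | tmul u v => simp
  | add a b ha hb => simp only [map_add, LinearMap.add_apply, ha, hb]

/-- For `w = u ⊗ v` this reads `h₁ u ⊗ S(h₂ v) h₃ · f = h u ⊗ S(v) · f`; for `w = Δ(g)` it says
that `untwist` is equivariant at `g ⊗ f`. -/
lemma sum_untwistAux_dualAct (h : H) (f : Module.Dual k H) (w : H ⊗[k] H)
    (r : Coalgebra.Repr k h (H × H)) :
    ∑ i ∈ r.index, untwistAux (dualAct k H (r.right i) f) (comul (r.left i) * w) =
      h • untwistAux f w := by
  induction w with
  | zero => simp
  | add a b ha hb => simp only [mul_add, map_add, Finset.sum_add_distrib, ha, hb, smul_add]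
  | tmul u v =>
    -- `T (x ⊗ (y ⊗ z)) = x u ⊗ S(v) S(y) z · f`
    let T : H ⊗[k] (H ⊗[k] H) →ₗ[k] H ⊗[k] Module.Dual k H :=
      TensorProduct.map (LinearMap.mulRight k u)
        ((dualAct k H).flip f ∘ₗ LinearMap.mulLeft k (antipode k v) ∘ₗ
          LinearMap.mul' k H ∘ₗ (antipode k).rTensor H)
    have key : ∀ (c : H ⊗[k] H) (z : H),
        untwistAux (dualAct k H z f) (c * u ⊗ₜ v) =
          T (TensorProduct.assoc k H H H (c ⊗ₜ z)) := by
      intro c z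
      induction c with
      | zero => simp
      | tmul x y =>
        simp [T, untwistAux, antipode_mul_antidistrib, dualAct_mul]
      | add a b ha hb => simp only [add_mul, map_add, add_tmul, ha, hb]
    have h1 : ∑ i ∈ r.index, untwistAux (dualAct k H (r.right i) f) (comul (r.left i) * u ⊗ₜ v)
        = T (TensorProduct.assoc k H H H (comul.rTensor H (comul h))) := by
      simp only [key, ← r.eq, map_sum, LinearMap.rTensor_tmul]
    rw [h1, coassoc_apply, ← r.eq]
    simp only [map_sum, LinearMap.lTensor_tmul, T, TensorProduct.map_tmul, LinearMap.comp_apply,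
      mul_antipode_rTensor_comul_apply]
    have h2 : ∑ i ∈ r.index, counit (R := k) (r.right i) • r.left i = h := by
      simpa only [map_sum, TensorProduct.rid_tmul, one_smul] using
        congr(TensorProduct.rid k H $(sum_tmul_counit_eq r))
    conv_rhs => rw [← h2]
    simp [untwistAux, Algebra.algebraMap_eq_smul_one, Finset.sum_smul, smul_tmul']

lemma untwist_diag (h : H) (t : H ⊗[k] Module.Dual k H) :
    untwist (diag h t) = h • untwist t := by
  induction t with
  | zero => simp
  | add a b ha hb => simp only [map_add, ha, hb, smul_add]
  | tmul g f =>
    rw [diag_tmul, untwist_tmul, ← sum_untwistAux_dualAct h f _ (ℛ k h), ← (ℛ k h).eq]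
    simp [untwist_tmul]

/-- In the convolution algebra `Hom(H, H ⊗ H)` put `α(h) = h ⊗ 1` and `β(h) = 1 ⊗ h`.
Cocommutativity says `Δ = β * α`, so `α * Δ⁻¹ = β⁻¹`, where `Δ⁻¹ = Δ ∘ S` and
`β⁻¹(h) = 1 ⊗ S(h)`. -/
lemma one_tmul_antipode
    (hcocomm : (TensorProduct.comm k H H).toLinearMap ∘ₗ comul = (comul : H →ₗ[k] H ⊗[k] H))
    (h : H) (r : Coalgebra.Repr k h (H × H)) :
    (1 : H) ⊗ₜ[k] antipode k h =
      ∑ i ∈ r.index, (r.left i ⊗ₜ[k] (1 : H)) * comul (antipode k (r.right i)) := by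
  let α : H →ₗ[k] H ⊗[k] H := (TensorProduct.mk k H H).flip 1
  let β : H →ₗ[k] H ⊗[k] H := TensorProduct.mk k H H 1
  have h1 : toConv β * toConv α = toConv (comul : H →ₗ[k] H ⊗[k] H) := by
    ext x
    rw [(ℛ k x).convMul_apply]
    have := congr($hcocomm x)
    rw [LinearMap.comp_apply, ← (ℛ k x).eq, LinearEquiv.coe_coe, map_sum, (ℛ k x).eq] at this
    simpa [α, β] using this
  have h2 : toConv (β ∘ₗ antipode k) * toConv β = 1 := by
    ext x
    rw [(ℛ k x).convMul_apply]
    simp [β, ← tmul_sum, sum_antipode_mul_eq_algebraMap_counit (ℛ k x),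
      Algebra.algebraMap_eq_smul_one, Algebra.TensorProduct.one_def]
  have h3 : toConv α * toConv (comul ∘ₗ antipode k) = toConv (β ∘ₗ antipode k) := by
    rw [← one_mul (toConv α), ← h2, mul_assoc _ (toConv β), h1, mul_assoc,
      LinearMap.comul_right_inv, mul_one]
  have := congr($h3 h)
  rw [r.convMul_apply] at this
  simpa [α, β] using this.symm

/-- The contraction `u ⊗ v ↦ f(v) u`. -/
noncomputable def slice (f : Module.Dual k H) : H ⊗[k] H →ₗ[k] H :=
  (TensorProduct.rid k H).toLinearMap ∘ₗ f.lTensor H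

@[simp] lemma slice_tmul (f : Module.Dual k H) (u v : H) : slice f (u ⊗ₜ[k] v) = f v • u := by
  simp [slice]

lemma slice_dualAct (h : H) (f : Module.Dual k H) (w : H ⊗[k] H) :
    slice (dualAct k H h f) w = slice f ((1 ⊗ₜ antipode k h) * w) := by
  induction w with
  | zero => simp
  | tmul u v => simp
  | add a b ha hb => simp only [mul_add, map_add, ha, hb]

lemma slice_tmul_one_mul (g : H) (f : Module.Dual k H) (w : H ⊗[k] H) :
    slice f ((g ⊗ₜ 1) * w) = g * slice f w := by
  induction w with
  | zero => simp
  | tmul u v => simp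
  | add a b ha hb => simp only [mul_add, map_add, ha, hb]

variable [FiniteDimensional k H]

variable (k H) in
/-- The identification of `H ⊗ H*` with `End(H)`, sending `u ⊗ f` to `x ↦ f(x) u`. -/
noncomputable def tensorEquiv : H ⊗[k] Module.Dual k H ≃ₗ[k] (H →ₗ[k] H) :=
  TensorProduct.comm k H (Module.Dual k H) ≪≫ₗ dualTensorHomEquiv k H H

@[simp] lemma tensorEquiv_tmul (u x : H) (f : Module.Dual k H) :
    tensorEquiv k H (u ⊗ₜ f) x = f x • u := by
  simp [tensorEquiv]

lemma tensorEquiv_diag (h x : H) (t : H ⊗[k] Module.Dual k H)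
    (r : Coalgebra.Repr k h (H × H)) :
    tensorEquiv k H (diag h t) x =
      ∑ i ∈ r.index, r.left i * tensorEquiv k H t (antipode k (r.right i) * x) := by
  induction t with
  | zero => simp
  | add a b ha hb =>
    simp only [map_add, LinearMap.add_apply, ha, hb, mul_add, Finset.sum_add_distrib]
  | tmul g f =>
    rw [diag_tmul, ← r.eq]
    simp

variable (k H) in
/-- The map `H* → H ⊗ H*` sending `f` to the tensor that represents `x ↦ f(x₂) x₁`. -/
noncomputable def coev (f : Module.Dual k H) : H ⊗[k] Module.Dual k H :=
  (tensorEquiv k H).symm (slice f ∘ₗ comul)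

lemma coev_add (f g : Module.Dual k H) : coev k H (f + g) = coev k H f + coev k H g := by
  rw [coev, coev, coev, ← map_add]
  congr 1
  ext x
  simp [slice, LinearMap.lTensor_add]

lemma coev_dualAct
    (hcocomm : (TensorProduct.comm k H H).toLinearMap ∘ₗ comul = (comul : H →ₗ[k] H ⊗[k] H))
    (h : H) (f : Module.Dual k H) :
    coev k H (dualAct k H h f) = diag h (coev k H f) := by
  apply (tensorEquiv k H).injective
  ext x
  rw [tensorEquiv_diag _ _ _ (ℛ k h)]
  simp only [coev, LinearEquiv.apply_symm_apply, LinearMap.comp_apply, slice_dualAct,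
    one_tmul_antipode hcocomm h (ℛ k h), Bialgebra.comul_mul, Finset.sum_mul, map_sum, mul_assoc,
    slice_tmul_one_mul]

variable (k H) in
/-- The action map `h ⊗ f ↦ h · f`. -/
noncomputable def actMap : H ⊗[k] Module.Dual k H →ₗ[k] Module.Dual k H :=
  TensorProduct.lift (dualAct k H)

lemma actMap_untwist (t : H ⊗[k] Module.Dual k H) (x : H) :
    actMap k H (untwist t) x = counit (R := k) (tensorEquiv k H t x) := by
  induction t with
  | zero => simp
  | add a b ha hb => simp only [map_add, LinearMap.add_apply, ha, hb]
  | tmul g f =>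
    have key : ∀ w : H ⊗[k] H, actMap k H (untwistAux f w) =
        dualAct k H (LinearMap.mul' k H ((antipode k).lTensor H w)) f := by
      intro w
      induction w with
      | zero => simp
      | tmul u v => simp [actMap, untwistAux, dualAct_mul]
      | add a b ha hb => simp only [map_add, ha, hb, LinearMap.add_apply]
    rw [untwist_tmul, key, mul_antipode_lTensor_comul_apply, Algebra.algebraMap_eq_smul_one]
    simp [mul_comm]

lemma actMap_untwist_coev (f : Module.Dual k H) : actMap k H (untwist (coev k H f)) = f := by
  ext x
  rw [actMap_untwist, coev, LinearEquiv.apply_symm_apply, LinearMap.comp_apply, ← (ℛ k x).eq]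
  have := congr(f $(sum_counit_smul (ℛ k x)))
  simpa [mul_comm] using this

end DualProjective

/-- Let `H` be a finite-dimensional cocommutative Hopf algebra over a field `k` with antipode
`S`.  Equip the `k`-linear dual `H* = Hom_k(H, k)` with the left `H`-module structure given by
`(h • f) x = f (S h * x)`.  Then `H*` is a projective left `H`-module. -/
theorem projective_dual_of_finiteDimensional_cocomm_hopf
    {k H : Type*} [Field k] [Ring H] [HopfAlgebra k H] [FiniteDimensional k H]
    (hcocomm : (TensorProduct.comm k H H).toLinearMap ∘ₗ Coalgebra.comul =
      (Coalgebra.comul : H →ₗ[k] H ⊗[k] H))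
    (inst : Module H (Module.Dual k H))
    (hsmul : ∀ (h : H) (f : Module.Dual k H) (x : H),
      (@SMul.smul H (Module.Dual k H) inst.toDistribMulAction.toMulAction.toSMul h f) x =
        f (HopfAlgebra.antipode (R := k) h * x)) :
    @Module.Projective H _ (Module.Dual k H) _ inst := by
  have hact : ∀ (h : H) (f : Module.Dual k H), h • f = DualProjective.dualAct k H h f :=
    fun h f => LinearMap.ext (hsmul h f)
  let sec : Module.Dual k H →ₗ[H] H ⊗[k] Module.Dual k H :=
    { toFun := fun f => DualProjective.untwist (DualProjective.coev k H f)
      map_add' := fun f g => by rw [DualProjective.coev_add, map_add]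
      map_smul' := fun h f => by
        rw [hact, DualProjective.coev_dualAct hcocomm, DualProjective.untwist_diag,
          RingHom.id_apply] }
  let act : H ⊗[k] Module.Dual k H →ₗ[H] Module.Dual k H :=
    { toFun := DualProjective.actMap k H
      map_add' := map_add _
      map_smul' := fun h t => by
        rw [hact, RingHom.id_apply]
        induction t with
        | zero => simp
        | tmul g f => simp [DualProjective.actMap, smul_tmul', DualProjective.dualAct_mul]
        | add a b ha hb => simp only [smul_add, map_add, ha, hb] }
  exact Module.Projective.of_split sec act
    (LinearMap.ext fun f => DualProjective.actMap_untwist_coev f)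
end

section
/- Let H be a Hopf algebra over a field k, let P be a projective left H-module, and let M be any left H-module. Then the tensor product P ⊗_k M, equipped with the diagonal H-action h · (p ⊗ m) = Σ h₍₁₎p ⊗ h₍₂₎m, is a projective left H-module. -/
/-!
The action map `π : H ⊗ (P ⊗ M) → P ⊗ M`, `h ⊗ t ↦ h • t`, is `H`-linear when `H` acts on its
source through the left factor, and that source is free because `k` is a field. It therefore
suffices to split `π` over `H`.

Since `P` is projective, the action map `H ⊗ P → P` has an `H`-linear section `s`. Writing
`s p = Σ hᵢ ⊗ pᵢ`, the section of `π` is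
`p ⊗ m ↦ Σ hᵢ₍₁₎ ⊗ (pᵢ ⊗ S(hᵢ₍₂₎) m)`, that is, `untwist ∘ (s ⊗ M)`.
It is `H`-linear because `Σ h₍₁₎ ⊗ S(h₍₂₎) h₍₃₎ = h ⊗ 1` and `S` is antimultiplicative, and it
splits `π` because `Σ h₍₁₎ ⊗ h₍₂₎ S(h₍₃₎) = h ⊗ 1`.
-/

open TensorProduct

/-- The `H`-action on `M`, as a `k`-linear map `H ⊗[k] M → M`. -/
noncomputable def actionMap (k H M : Type*) [CommRing k] [Ring H] [Algebra k H]
    [AddCommGroup M] [Module k M] [Module H M] [IsScalarTower k H M] [SMulCommClass k H M] :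
    H ⊗[k] M →ₗ[k] M :=
  TensorProduct.lift
    { toFun := fun h =>
        { toFun := fun m => h • m
          map_add' := fun m₁ m₂ => smul_add h m₁ m₂
          map_smul' := fun r m => (smul_comm r h m).symm }
      map_add' := fun h₁ h₂ => LinearMap.ext fun m => add_smul h₁ h₂ m
      map_smul' := fun r h => LinearMap.ext fun m => smul_assoc r h m }

/-- The diagonal action `h • (p ⊗ m) = Σ h₍₁₎ p ⊗ h₍₂₎ m`, as a `k`-linear map
`H ⊗[k] (P ⊗[k] M) → P ⊗[k] M`. -/
noncomputable def tensorDiagonalActionMap (k H P M : Type*) [CommRing k] [Ring H]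
    [HopfAlgebra k H]
    [AddCommGroup P] [Module k P] [Module H P] [IsScalarTower k H P] [SMulCommClass k H P]
    [AddCommGroup M] [Module k M] [Module H M] [IsScalarTower k H M] [SMulCommClass k H M] :
    H ⊗[k] (P ⊗[k] M) →ₗ[k] P ⊗[k] M :=
  (TensorProduct.map (actionMap k H P) (actionMap k H M)) ∘ₗ
    (TensorProduct.tensorTensorTensorComm k H H P M).toLinearMap ∘ₗ
    (LinearMap.rTensor (P ⊗[k] M) (Coalgebra.comul (R := k) (A := H)))

open Coalgebra HopfAlgebra in
/-- `Σ h₍₁₎ ⊗ S(h₍₂₎) h₍₃₎ = h ⊗ 1`, with `Δ` iterated on the left factor. -/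
theorem sum_left_tmul_antipode_mul {k H : Type*} [Field k] [Ring H] [HopfAlgebra k H] (h : H) :
    ∑ i ∈ (ℛ k h).index, ∑ j ∈ (ℛ k ((ℛ k h).left i)).index,
      (ℛ k ((ℛ k h).left i)).left j ⊗ₜ[k]
        (antipode k ((ℛ k ((ℛ k h).left i)).right j) * (ℛ k h).right i) = h ⊗ₜ[k] (1 : H) := by
  have h1 := congr((LinearMap.mul' k H ∘ₗ (antipode k).rTensor H).lTensor H
    $(sum_tmul_tmul_eq (ℛ k h) (fun i => ℛ k ((ℛ k h).left i))
      (fun i => ℛ k ((ℛ k h).right i))))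
  simp only [map_sum, LinearMap.lTensor_tmul, LinearMap.comp_apply, LinearMap.rTensor_tmul,
    LinearMap.mul'_apply] at h1
  rw [h1]
  simp only [← TensorProduct.tmul_sum, sum_antipode_mul_eq_smul, TensorProduct.tmul_smul,
    TensorProduct.smul_tmul', ← TensorProduct.sum_tmul]
  congr 1
  simpa only [map_sum, TensorProduct.rid_tmul, one_smul] using
    congr(TensorProduct.rid k H $(sum_tmul_counit_eq (ℛ k h)))

open Coalgebra HopfAlgebra in
/-- `Σ h₍₁₎ ⊗ h₍₂₎ S(h₍₃₎) = h ⊗ 1`, with `Δ` iterated on the left factor. -/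
theorem sum_left_tmul_mul_antipode {k H : Type*} [Field k] [Ring H] [HopfAlgebra k H] (h : H) :
    ∑ i ∈ (ℛ k h).index, ∑ j ∈ (ℛ k ((ℛ k h).left i)).index,
      (ℛ k ((ℛ k h).left i)).left j ⊗ₜ[k]
        ((ℛ k ((ℛ k h).left i)).right j * antipode k ((ℛ k h).right i)) = h ⊗ₜ[k] (1 : H) := by
  have h1 := congr((LinearMap.mul' k H ∘ₗ (antipode k).lTensor H).lTensor H
    $(sum_tmul_tmul_eq (ℛ k h) (fun i => ℛ k ((ℛ k h).left i))
      (fun i => ℛ k ((ℛ k h).right i))))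
  simp only [map_sum, LinearMap.lTensor_tmul, LinearMap.comp_apply,
    LinearMap.mul'_apply] at h1
  rw [h1]
  simp only [← TensorProduct.tmul_sum, sum_mul_antipode_eq_smul, TensorProduct.tmul_smul,
    TensorProduct.smul_tmul', ← TensorProduct.sum_tmul]
  congr 1
  simpa only [map_sum, TensorProduct.rid_tmul, one_smul] using
    congr(TensorProduct.rid k H $(sum_tmul_counit_eq (ℛ k h)))

section

variable {k H P M : Type*} [Field k] [Ring H] [HopfAlgebra k H]
    [AddCommGroup P] [Module k P] [Module H P] [IsScalarTower k H P] [SMulCommClass k H P]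
    [AddCommGroup M] [Module k M] [Module H M] [IsScalarTower k H M] [SMulCommClass k H M]

@[simp]
theorem actionMap_tmul (h : H) (m : M) : actionMap k H M (h ⊗ₜ[k] m) = h • m := rfl

theorem tensorDiagonalActionMap_tmul {ι : Type*} {h : H} (r : Coalgebra.Repr k h ι)
    (p : P) (m : M) :
    tensorDiagonalActionMap k H P M (h ⊗ₜ[k] (p ⊗ₜ[k] m)) =
      ∑ i ∈ r.index, (r.left i • p) ⊗ₜ[k] (r.right i • m) := by
  simp [tensorDiagonalActionMap, ← r.eq, TensorProduct.sum_tmul]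

variable (k H P M) in
/-- The map `(h ⊗ p) ⊗ m ↦ Σ h₍₁₎ ⊗ (p ⊗ S(h₍₂₎) m)`. -/
noncomputable def untwist : (H ⊗[k] P) ⊗[k] M →ₗ[k] H ⊗[k] (P ⊗[k] M) :=
  (TensorProduct.leftComm k P H M).toLinearMap ∘ₗ
    LinearMap.lTensor P
      (LinearMap.lTensor H (actionMap k H M ∘ₗ LinearMap.rTensor M (HopfAlgebra.antipode k)) ∘ₗ
        (TensorProduct.assoc k H H M).toLinearMap ∘ₗ LinearMap.rTensor M Coalgebra.comul) ∘ₗ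
    (TensorProduct.leftComm k H P M).toLinearMap ∘ₗ (TensorProduct.assoc k H P M).toLinearMap

/-- The map `a ⊗ b ↦ a ⊗ (p ⊗ S(b) m)`, which computes `untwist` when applied to `Δ(h)`. -/
noncomputable def untwistAux (p : P) (m : M) : H ⊗[k] H →ₗ[k] H ⊗[k] (P ⊗[k] M) :=
  LinearMap.lTensor H (TensorProduct.mk k P M p ∘ₗ actionMap k H M ∘ₗ
    (TensorProduct.mk k H M).flip m ∘ₗ HopfAlgebra.antipode k)

@[simp]
theorem untwistAux_tmul (p : P) (m : M) (a b : H) :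
    untwistAux p m (a ⊗ₜ[k] b) = a ⊗ₜ[k] (p ⊗ₜ[k] (HopfAlgebra.antipode k b • m)) := rfl

theorem untwist_tmul (h : H) (p : P) (m : M) :
    untwist k H P M ((h ⊗ₜ[k] p) ⊗ₜ[k] m) = untwistAux p m (Coalgebra.comul h) := by
  rw [← (Coalgebra.Repr.arbitrary k h).eq]
  simp only [untwist, LinearMap.comp_apply, LinearEquiv.coe_coe, TensorProduct.assoc_tmul,
    TensorProduct.leftComm_tmul, LinearMap.lTensor_tmul, LinearMap.rTensor_tmul]
  rw [← (Coalgebra.Repr.arbitrary k h).eq]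
  simp [TensorProduct.sum_tmul, TensorProduct.tmul_sum]

open Coalgebra HopfAlgebra in
/-- `untwist` carries the diagonal action on its source to the action on the left factor. -/
theorem sum_untwist_smul {h : H} (x : H ⊗[k] P) (m : M) :
    ∑ i ∈ (ℛ k h).index,
      untwist k H P M (((ℛ k h).left i • x) ⊗ₜ[k] ((ℛ k h).right i • m)) =
      h • untwist k H P M (x ⊗ₜ[k] m) := by
  induction x with
  | zero => simp
  | add x y hx hy =>
    simp only [smul_add, TensorProduct.add_tmul, map_add, Finset.sum_add_distrib, hx, hy]
  | tmul g p =>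
    -- `T a b` is `x ⊗ y ↦ x a ⊗ (p ⊗ S(b) y m)`.
    let T (a b : H) : H ⊗[k] H →ₗ[k] H ⊗[k] (P ⊗[k] M) :=
      TensorProduct.map (LinearMap.mulRight k a) (TensorProduct.mk k P M p ∘ₗ actionMap k H M ∘ₗ
        (TensorProduct.mk k H M).flip m ∘ₗ LinearMap.mulLeft k (antipode k b))
    have hT (a b x y : H) : T a b (x ⊗ₜ y) = (x * a) ⊗ₜ (p ⊗ₜ ((antipode k b * y) • m)) := rfl
    have key (l) := congr(T ((ℛ k g).left l) ((ℛ k g).right l)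
      $(sum_left_tmul_antipode_mul (k := k) h))
    simp only [map_sum, hT, mul_one] at key
    have h2 (i) : comul (R := k) ((ℛ k h).left i * g) =
        ∑ l ∈ (ℛ k g).index, ∑ j ∈ (ℛ k ((ℛ k h).left i)).index,
          ((ℛ k ((ℛ k h).left i)).left j * (ℛ k g).left l) ⊗ₜ[k]
          ((ℛ k ((ℛ k h).left i)).right j * (ℛ k g).right l) := by
      rw [Bialgebra.comul_mul, ← (ℛ k g).eq, ← (ℛ k ((ℛ k h).left i)).eq, Finset.sum_mul_sum,
        Finset.sum_comm]
      simp
    simp only [TensorProduct.smul_tmul', smul_eq_mul, untwist_tmul, h2, map_sum, untwistAux_tmul,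
      antipode_mul_antidistrib, smul_smul, mul_assoc]
    rw [Finset.sum_comm]
    simp only [key]
    rw [← (ℛ k g).eq]
    simp [Finset.smul_sum, TensorProduct.smul_tmul']

open Coalgebra HopfAlgebra in
theorem tensorDiagonalActionMap_untwist (x : H ⊗[k] P) (m : M) :
    tensorDiagonalActionMap k H P M (untwist k H P M (x ⊗ₜ[k] m)) =
      actionMap k H P x ⊗ₜ[k] m := by
  induction x with
  | zero => simp
  | add x y hx hy => simp only [TensorProduct.add_tmul, map_add, hx, hy]
  | tmul h p =>
    -- `T` is `x ⊗ y ↦ x p ⊗ y m`.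
    let T : H ⊗[k] H →ₗ[k] P ⊗[k] M :=
      TensorProduct.map (actionMap k H P ∘ₗ (TensorProduct.mk k H P).flip p)
        (actionMap k H M ∘ₗ (TensorProduct.mk k H M).flip m)
    have hT (x y : H) : T (x ⊗ₜ y) = (x • p) ⊗ₜ (y • m) := rfl
    have key := congr(T $(sum_left_tmul_mul_antipode (k := k) h))
    simp only [map_sum, hT, one_smul] at key
    rw [untwist_tmul, ← (ℛ k h).eq, actionMap_tmul, ← key]
    simp only [map_sum, untwistAux_tmul]
    refine Finset.sum_congr rfl fun i _ => ?_
    rw [tensorDiagonalActionMap_tmul (ℛ k ((ℛ k h).left i))]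
    simp only [smul_smul]

/-- The theorem for a module `D` identified with `P ⊗ M` carrying the diagonal action. The
separate type keeps this action apart from Mathlib's action of `H` on the left factor of `P ⊗ M`. -/
theorem projective_of_diagonal_equiv [Module.Projective H P]
    {D : Type*} [AddCommGroup D] [Module k D] [Module H D] (e : P ⊗[k] M ≃ₗ[k] D)
    (he : ∀ (h : H) (t : P ⊗[k] M), h • e t = e (tensorDiagonalActionMap k H P M (h ⊗ₜ[k] t))) :
    Module.Projective H D := by
  let act : H ⊗[k] P →ₗ[H] P :=
    { actionMap k H P with
      map_smul' := fun g x => by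
        induction x with
        | zero => simp
        | add x y hx hy => simp_all
        | tmul h p => simp [TensorProduct.smul_tmul', mul_smul] }
  obtain ⟨s, hs⟩ := Module.projective_lifting_property act LinearMap.id
    (fun p => ⟨1 ⊗ₜ p, one_smul H p⟩)
  have hs' (p : P) : actionMap k H P (s p) = p := congr($hs p)
  let π : H ⊗[k] (P ⊗[k] M) →ₗ[H] D :=
    { e.toLinearMap ∘ₗ tensorDiagonalActionMap k H P M with
      map_smul' := fun g x => by
        induction x with
        | zero => simp
        | add x y hx hy => simp_all
        | tmul h t => simp [TensorProduct.smul_tmul', ← he, mul_smul] }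
  let i₀ : P ⊗[k] M →ₗ[k] H ⊗[k] (P ⊗[k] M) :=
    untwist k H P M ∘ₗ LinearMap.rTensor M (s.restrictScalars k)
  have hi₀ (p : P) (m : M) : i₀ (p ⊗ₜ m) = untwist k H P M (s p ⊗ₜ m) := rfl
  let i : D →ₗ[H] H ⊗[k] (P ⊗[k] M) :=
    { i₀ ∘ₗ e.symm.toLinearMap with
      map_smul' := fun g d => by
        obtain ⟨t, rfl⟩ := e.surjective d
        rw [he]
        simp only [AddHom.toFun_eq_coe, LinearMap.coe_toAddHom, LinearMap.comp_apply,
          LinearEquiv.coe_coe, LinearEquiv.symm_apply_apply, RingHom.id_apply]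
        induction t with
        | zero => simp
        | add x y hx hy => simp only [TensorProduct.tmul_add, map_add, smul_add, hx, hy]
        | tmul p m =>
          rw [tensorDiagonalActionMap_tmul (Coalgebra.Repr.arbitrary k g)]
          simp only [map_sum, hi₀, map_smul]
          exact sum_untwist_smul (s p) m }
  refine Module.Projective.of_split i π (LinearMap.ext fun d => ?_)
  obtain ⟨t, rfl⟩ := e.surjective d
  change e (tensorDiagonalActionMap k H P M (i₀ (e.symm (e t)))) = e t
  rw [e.symm_apply_apply]
  congr 1
  induction t with
  | zero => simp
  | add x y hx hy => simp only [map_add, hx, hy]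
  | tmul p m => rw [hi₀, tensorDiagonalActionMap_untwist, hs']

end

/-- Let `H` be a Hopf algebra over a field `k`, `P` a projective left `H`-module, and `M` any
left `H`-module.  Then `P ⊗[k] M`, equipped with the diagonal `H`-action
`h • (p ⊗ m) = Σ h₍₁₎ p ⊗ h₍₂₎ m`, is a projective left `H`-module. -/
theorem projective_tensorProduct_diagonal_of_projective
    {k H P M : Type*} [Field k] [Ring H] [HopfAlgebra k H]
    [AddCommGroup P] [Module k P] [Module H P] [IsScalarTower k H P] [SMulCommClass k H P]
    [AddCommGroup M] [Module k M] [Module H M] [IsScalarTower k H M] [SMulCommClass k H M]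
    [Module.Projective H P]
    (instD : Module H (P ⊗[k] M))
    (hD : ∀ (h : H) (t : P ⊗[k] M),
      @SMul.smul H (P ⊗[k] M) instD.toDistribMulAction.toMulAction.toSMul h t =
        tensorDiagonalActionMap k H P M (h ⊗ₜ[k] t)) :
    @Module.Projective H _ (P ⊗[k] M) _ instD := by
  exact @projective_of_diagonal_equiv k H P M _ _ _ _ _ _ _ _ _ _ _ _ _ _ (P ⊗[k] M) _ _ instD
    (LinearEquiv.refl k _) hD
end
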